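/- arXiv:1909.08586 — 2 statements merged into one kernel-verified Lean document; each statement's English description precedes it below -/
import Mathlib

section
/- For every integer n > 1 and every s = (s₀,s₁,s₂) ∈ ℝ₊³, the ℓ∞ diameter of P_n(s) is greater than (s₁ + s₂)⌊n/2⌋²/4. -/
/-!
A function of `v.2` alone has vanishing hessians of classes 0 and 1, and its class 2 hessian is
minus its second difference; a function of `v.1 - v.2` alone has vanishing hessians of classes 0
and 2, and its class 1 hessian is minus its second difference. The parabola `k (n - k) / 2` on
`{0, …, n - 1}`, extended periodically (`parab`), has second difference at least `-1`
(`parab_second_diff`). Hence `s₂ p(v.2) + s₁ p(v.1 - v.2)`, shifted to mean zero, lies in the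
polytope, and its oscillation is at least `(s₁ + s₂) ⌊n/2⌋² / 2`. Since the polytope is invariant
under translations of the torus, comparing this function with its translate by the vector from a
minimum to a maximum shows that the diameter is at least this oscillation.
-/

open MeasureTheory Filter

/-- Discrete hessian of class `r` of `x : V(T_n) → ℝ` at the base vertex `v` of a unit
rhombus of the triangular lattice torus `T_n`, where `V(T_n)` is identified with
`ZMod n × ZMod n` via `1 ↦ (1,0)`, `ω ↦ (0,1)`.  For a rhombus `{a,b,c,d}` of class `r`
(i.e. `b - a = z` with `z = 1, ω, ω²` respectively) the hessian is
`-x a + x b - x c + x d`. -/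
def hess (n : ℕ) (r : Fin 3) (x : (ZMod n × ZMod n) → ℝ) (v : ZMod n × ZMod n) : ℝ :=
  if r = 0 then -x v + x (v + (1, 0)) - x (v + (2, 1)) + x (v + (1, 1))
  else if r = 1 then -x v + x (v + (0, 1)) - x (v + (-1, 1)) + x (v + (-1, 0))
  else -x v + x (v + (-1, -1)) - x (v + (-1, -2)) + x (v + (0, -1))

/-- The polytope `P_n(s)`: mean-zero functions on `V(T_n)` with `∇²x ≼ s`. -/
def polyP (n : ℕ) [NeZero n] (s : Fin 3 → ℝ) : Set ((ZMod n × ZMod n) → ℝ) :=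
  {x | (∑ v : ZMod n × ZMod n, x v) = 0 ∧ ∀ r v, hess n r x v ≤ s r}

/-- The polytope `P̃_n(s)`: functions on `V(T_n)` vanishing at `0` with `∇²x ≼ s`. -/
def polyPt (n : ℕ) [NeZero n] (s : Fin 3 → ℝ) : Set ((ZMod n × ZMod n) → ℝ) :=
  {x | x 0 = 0 ∧ ∀ r v, hess n r x v ≤ s r}

/-- The `d`-dimensional (Hausdorff) volume of a set of functions on `V(T_n)`, computed
with respect to the Euclidean structure on `ℝ^{V(T_n)}`. -/
noncomputable def evol (n : ℕ) [NeZero n] (d : ℝ) (A : Set ((ZMod n × ZMod n) → ℝ)) : ℝ :=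
  (μH[d] ((EuclideanSpace.equiv (ZMod n × ZMod n) ℝ).symm '' A)).toReal

/-- `f_n(s) = |P_n(s)|^{1/(n²-1)}`. -/
noncomputable def fn (n : ℕ) [NeZero n] (s : Fin 3 → ℝ) : ℝ :=
  evol n ((n : ℝ) ^ 2 - 1) (polyP n s) ^ (1 / ((n : ℝ) ^ 2 - 1))

/-- The parabola `k (n - k) / 2` on `{0, …, n - 1}`, as a function on `ℤ/nℤ`. -/
noncomputable def parab (n : ℕ) (k : ZMod n) : ℝ := (k.val : ℝ) * (n - k.val) / 2

lemma parab_nonneg (n : ℕ) [NeZero n] (k : ZMod n) : 0 ≤ parab n k := by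
  have h : (k.val : ℝ) ≤ n := by exact_mod_cast (ZMod.val_lt k).le
  unfold parab
  have : (0 : ℝ) ≤ (n : ℝ) - k.val := by linarith
  positivity

/-- The periodic parabola dominates the parabola on `ℤ`, which is nonpositive outside `(0, n)`. -/
lemma le_parab (n : ℕ) [NeZero n] (z : ℤ) : (z : ℝ) * (n - z) / 2 ≤ parab n (z : ZMod n) := by
  by_cases h0 : 0 ≤ z
  · by_cases h1 : z < n
    · have hv : (((z : ZMod n).val : ℤ)) = z := by
        rw [ZMod.val_intCast, Int.emod_eq_of_lt h0 h1]
      have hv' : ((z : ZMod n).val : ℝ) = z := by exact_mod_cast hv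
      rw [parab, hv']
    · have h2 : (n : ℝ) ≤ z := by exact_mod_cast not_lt.mp h1
      have h3 : (0 : ℝ) ≤ z := by exact_mod_cast h0
      have := parab_nonneg n (z : ZMod n)
      nlinarith
  · have h2 : (z : ℝ) ≤ 0 := by exact_mod_cast (not_le.mp h0).le
    have h3 : (0 : ℝ) ≤ n := Nat.cast_nonneg n
    have := parab_nonneg n (z : ZMod n)
    nlinarith

lemma parab_second_diff (n : ℕ) [NeZero n] (k : ZMod n) :
    2 * parab n k - parab n (k - 1) - parab n (k + 1) ≤ 1 := by
  have h1 := le_parab n ((k.val : ℤ) - 1)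
  have h2 := le_parab n ((k.val : ℤ) + 1)
  have e1 : (((k.val : ℤ) - 1 : ℤ) : ZMod n) = k - 1 := by simp
  have e2 : (((k.val : ℤ) + 1 : ℤ) : ZMod n) = k + 1 := by simp
  rw [e1] at h1
  rw [e2] at h2
  push_cast at h1 h2
  have h3 : parab n k = (k.val : ℝ) * (n - k.val) / 2 := rfl
  nlinarith

lemma polyP_translate {n : ℕ} [NeZero n] {s : Fin 3 → ℝ} {x : ZMod n × ZMod n → ℝ}
    (hx : x ∈ polyP n s) (t : ZMod n × ZMod n) : (fun v => x (v + t)) ∈ polyP n s := by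
  refine ⟨?_, fun r v => ?_⟩
  · rw [← hx.1]
    exact Equiv.sum_comp (Equiv.addRight t) x
  · have h := hx.2 r (v + t)
    simpa only [hess, add_right_comm] using h

/-- The superposition of a parabola in `v.2` and a parabola in `v.1 - v.2`, shifted by `c`. -/
noncomputable def ridge (n : ℕ) (s : Fin 3 → ℝ) (c : ℝ) (v : ZMod n × ZMod n) : ℝ :=
  s 2 * parab n v.2 + s 1 * parab n (v.1 - v.2) - c

lemma hess_ridge_le (n : ℕ) [NeZero n] (s : Fin 3 → ℝ) (hs : ∀ i, 0 < s i) (c : ℝ)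
    (r : Fin 3) (v : ZMod n × ZMod n) : hess n r (ridge n s c) v ≤ s r := by
  obtain ⟨i, j⟩ := v
  fin_cases r
  · have e1 : i + 1 - j = i - j + 1 := by ring
    have e2 : i + 2 - (j + 1) = i - j + 1 := by ring
    have e3 : i + 1 - (j + 1) = i - j := by ring
    have := hs 0
    simp only [hess, ridge, Prod.mk_add_mk, e1, e2, e3, add_zero]
    simp
    linarith
  · have e1 : i - (j + 1) = i - j - 1 := by ring
    have e2 : i + -1 - (j + 1) = i - j - 1 - 1 := by ring
    have e3 : i + -1 - j = i - j - 1 := by ring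
    have h := parab_second_diff n (i - j - 1)
    have := mul_le_mul_of_nonneg_left h (hs 1).le
    simp only [hess, ridge, Prod.mk_add_mk, e1, e2, e3, add_zero]
    simp only [sub_add_cancel] at this
    simp
    linarith
  · have e1 : i + -1 - (j + -1) = i - j := by ring
    have e2 : i + -1 - (j + -2) = i - j + 1 := by ring
    have e3 : i + 0 - (j + -1) = i - j + 1 := by ring
    have e4 : j + -2 = j + -1 - 1 := by ring
    have h := parab_second_diff n (j + -1)
    have := mul_le_mul_of_nonneg_left h (hs 2).le
    simp only [hess, ridge, Prod.mk_add_mk, e1, e2, e3]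
    rw [e4]
    simp only [neg_add_cancel_right] at this
    simp
    linarith

/-- Lemma: diameter of `P_n(s)`.  For every integer `n > 1` and every
`s ∈ ℝ₊³`, the `ℓ∞` diameter of `P_n(s)` is greater than `(s₁ + s₂)⌊n/2⌋²/4`; i.e. there
are two points of `P_n(s)` whose `ℓ∞` distance exceeds this quantity. -/
theorem stmt1 (n : ℕ) [NeZero n] (hn : 1 < n) (s : Fin 3 → ℝ) (hs : ∀ i, 0 < s i) :
    ∃ x ∈ polyP n s, ∃ y ∈ polyP n s,
      (s 1 + s 2) * ((n / 2 : ℕ) : ℝ) ^ 2 / 4 < ‖x - y‖ := by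
  -- `c` is the mean of the unshifted function.
  set c : ℝ := (∑ v, ridge n s 0 v) / (Fintype.card (ZMod n × ZMod n) : ℝ) with hc
  have hcard : (Fintype.card (ZMod n × ZMod n) : ℝ) ≠ 0 := by
    exact_mod_cast Fintype.card_ne_zero
  have hx : ridge n s c ∈ polyP n s := by
    refine ⟨?_, hess_ridge_le n s hs c⟩
    have h : ∀ v, ridge n s c v = ridge n s 0 v - c := fun v => by simp [ridge]
    simp_rw [h]
    rw [Finset.sum_sub_distrib, Finset.sum_const, Finset.card_univ, nsmul_eq_mul, hc,
      mul_div_cancel₀ _ hcard, sub_self]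
  set m : ℕ := n / 2 with hm
  have hm1 : 1 ≤ m := by omega
  have hmn : 2 * m ≤ n := by omega
  -- The unshifted function vanishes at `0` and has both parabolas at height `m (n - m) / 2` at `t`.
  set t : ZMod n × ZMod n := ((m : ZMod n) + m, (m : ZMod n)) with ht
  refine ⟨fun v => ridge n s c (v + t), polyP_translate hx t, ridge n s c, hx, ?_⟩
  have h0 : ridge n s c 0 = -c := by simp [ridge, parab]
  have hp : (m : ℝ) ^ 2 / 2 ≤ parab n (m : ZMod n) := by
    have h := le_parab n (m : ℤ)
    push_cast at h
    have h1 : (2 : ℝ) * m ≤ n := by exact_mod_cast hmn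
    have h2 : (0 : ℝ) ≤ m := Nat.cast_nonneg m
    nlinarith
  have h1 : ridge n s c (0 + t) = (s 1 + s 2) * parab n (m : ZMod n) - c := by
    simp [ridge, ht]
    ring
  have hle := norm_le_pi_norm ((fun v => ridge n s c (v + t)) - ridge n s c) 0
  have hS : 0 < s 1 + s 2 := add_pos (hs 1) (hs 2)
  have hmpos : (0 : ℝ) < (m : ℝ) ^ 2 := by positivity
  have key := mul_le_mul_of_nonneg_left hp hS.le
  have hpos := mul_pos hS hmpos
  refine lt_of_lt_of_le ?_ hle
  rw [Pi.sub_apply, h0, h1]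
  refine lt_of_lt_of_le ?_ (le_abs_self _)
  linarith
end

section
/- There is a universal constant C ≥ 1 such that for all integers n₂, n₃ with C < n₂ < n₃ and all s = (s₀,s₁,s₂) with 2 = s₀ ≤ s₁ ≤ s₂, one has |P_{n₂}(s)|^{1/n₂²} ≥ |P_{n₃}(s)|^{1/n₃²} (1 − C (n₃ − n₂) ln n₃ / n₃). -/
/-!
Identify the vertex `k + l (1 + ω)` with `(k, l)`. In these coordinates the three families of
rhombus inequalities become `torW n n s₁ s₂`, which makes sense on every torus
`ZMod m × ZMod n`, is invariant under translations and constants, and is exchanged with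
`torW n m s₂ s₁` by swapping coordinates. Up to the normalisation constant `cubeConst` of the
Hausdorff measure, `n |P_n(s)|` is the Lebesgue volume `torV n n s₁ s₂` of a slab of `torW`
(`hausdorffMeasure_polyP`).

The core is that deleting one row costs at most a factor `s₂ N ^ (10 N)`, for sides at most `N`
(`torV_succ_le`). By the Brunn–Minkowski inequality in the form of Prékopa and Leindler, and by
translation invariance along the rows, a proportion `N ^ (-O(N))` of the slab consists of functions
whose increments into and out of the row to be deleted are constant up to `1 / N`
(`volume_le_symmetrize`). For such a function the deleted row lies in a tube of volume `O(s₂ N)`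
determined by the other rows, and the other rows are carried into the smaller polytope by an affine
map of controlled determinant (`seamMap`): shrinking by `1 - 3 / n`, a linear term which
spreads half of the jump across the seam, and a concave profile using the slack so gained.

Deleting rows and, after swapping, columns gives
`torV n₃ n₃ ≤ (s₁ s₂ n₃ ^ (20 n₃)) ^ (n₃ - n₂) * torV n₂ n₂`. The constants `cubeConst` in dimensions
`n₃ ^ 2 - 1` and `n₂ ^ 2 - 1` are compared by stacking efficient covers of cubes
(`cubeConst_succ_le`). After taking logarithms the term `(n₃ - n₂) log (s₁ s₂)`, which is not
bounded, is absorbed by the difference of the exponents `1 / n₂ ^ 2` and `1 / n₃ ^ 2`, thanks to the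
lower bound `(s₁ s₂) ^ (n - 1) 4 ^ (- n ^ 2)` for the volume, obtained from a box inside the slab
(`le_torV`). The constant `C = 120` suffices.
-/

open MeasureTheory Filter

open scoped ENNReal Pointwise

/-! ### The Brunn–Minkowski inequality -/

/-- One-dimensional Brunn–Minkowski inequality, with the sumset replaced by any superset. -/
lemma volume_add_le_of_add_subset {A B C : Set ℝ} (hA : MeasurableSet A) (hB : MeasurableSet B)
    (hAn : A.Nonempty) (hBn : B.Nonempty) (h : ∀ a ∈ A, ∀ b ∈ B, a + b ∈ C) :
    volume A + volume B ≤ volume C := by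
  have key : ∀ K ⊆ A, ∀ L ⊆ B, IsCompact K → IsCompact L → K.Nonempty → L.Nonempty →
      volume K + volume L ≤ volume C := by
    intro K hKA L hLB hK hL hKn hLn
    obtain ⟨p, hpK, hp⟩ := hK.exists_isGreatest hKn
    obtain ⟨q, hqL, hq⟩ := hL.exists_isLeast hLn
    have h1 : volume K = volume ((fun x => x + q) '' K) := by
      rw [Set.image_add_right, measure_preimage_add_right]
    have h2 : volume L = volume ((fun x => p + x) '' L) := by
      rw [Set.image_add_left, measure_preimage_add]
    rw [h1, h2, ← measure_union₀]
    · apply measure_mono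
      rintro _ (⟨x, hx, rfl⟩ | ⟨x, hx, rfl⟩)
      · exact h _ (hKA hx) _ (hLB hqL)
      · exact h _ (hKA hpK) _ (hLB hx)
    · exact (hL.image (by fun_prop)).measurableSet.nullMeasurableSet
    -- the two translates meet only at `p + q`
    · refine measure_mono_null (t := {p + q}) ?_ (by simp)
      rintro _ ⟨⟨x, hx, rfl⟩, ⟨y, hy, hxy⟩⟩
      have := hp hx
      have := hq hy
      simp only [Set.mem_singleton_iff]
      simp only at hxy
      linarith
  obtain ⟨a, ha⟩ := hAn
  obtain ⟨b, hb⟩ := hBn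
  have key2 : ∀ a' < volume A, ∀ b' < volume B, a' + b' ≤ volume C := by
    intro a' ha' b' hb'
    obtain ⟨K, hKA, hK, hK'⟩ := hA.exists_lt_isCompact ha'
    obtain ⟨L, hLB, hL, hL'⟩ := hB.exists_lt_isCompact hb'
    have hKn : K.Nonempty := by
      rw [Set.nonempty_iff_ne_empty]; rintro rfl; simp at hK'
    have hLn : L.Nonempty := by
      rw [Set.nonempty_iff_ne_empty]; rintro rfl; simp at hL'
    exact (add_le_add hK'.le hL'.le).trans (key K hKA L hLB hK hL hKn hLn)
  rcases eq_or_ne (volume A) 0 with hA0 | hA0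
  · rw [hA0, zero_add, ← measure_preimage_add volume (-a) B]
    apply measure_mono
    intro x hx
    simpa using h a ha _ hx
  rcases eq_or_ne (volume B) 0 with hB0 | hB0
  · rw [hB0, add_zero, ← measure_preimage_add_right volume (-b) A]
    apply measure_mono
    intro x hx
    simpa using h _ hx b hb
  refine le_of_forall_lt fun c hc => ?_
  obtain ⟨a', ha', b', hb', hlt⟩ := ENNReal.exists_lt_add_of_lt_add hc hA0 hB0
  exact hlt.trans_le (key2 a' ha' b' hb')

lemma ennreal_geom_mean_le {t : ℝ} (ht0 : 0 < t) (ht1 : t < 1) (x y : ℝ≥0∞) :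
    x ^ (1 - t) * y ^ t ≤ ENNReal.ofReal (1 - t) * x + ENNReal.ofReal t * y := by
  have h1t : 0 < 1 - t := by linarith
  rcases eq_or_ne x ∞ with rfl | hx
  · rw [ENNReal.mul_top (by simpa using ht1)]; simp
  rcases eq_or_ne y ∞ with rfl | hy
  · rw [ENNReal.mul_top (by simpa using ht0)]; simp
  lift x to NNReal using hx
  lift y to NNReal using hy
  have := NNReal.geom_mean_le_arith_mean2_weighted (1 - t).toNNReal t.toNNReal x y (by
    rw [← Real.toNNReal_add h1t.le ht0.le]; simp)
  rw [Real.coe_toNNReal _ h1t.le, Real.coe_toNNReal _ ht0.le] at this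
  rw [← ENNReal.coe_rpow_of_nonneg _ h1t.le, ← ENNReal.coe_rpow_of_nonneg _ ht0.le,
    ENNReal.ofReal, ENNReal.ofReal]
  exact_mod_cast this

/-- One-dimensional Prékopa–Leindler inequality for functions with supremum `1`. -/
lemma prekopa_one_dim_normalized {t : ℝ} (ht0 : 0 < t) (ht1 : t < 1) {f g h : ℝ → ℝ≥0∞}
    (hf : Measurable f) (hg : Measurable g) (hh : Measurable h)
    (hf1 : ⨆ x, f x = 1) (hg1 : ⨆ x, g x = 1)
    (hfgh : ∀ x y, f x ^ (1 - t) * g y ^ t ≤ h ((1 - t) * x + t * y)) :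
    (∫⁻ x, f x) ^ (1 - t) * (∫⁻ x, g x) ^ t ≤ ∫⁻ x, h x := by
  have h1t : 0 < 1 - t := by linarith
  refine (ennreal_geom_mean_le ht0 ht1 _ _).trans ?_
  have layer : ∀ φ : ℝ → ℝ≥0∞, Measurable φ → (∀ x, φ x ≤ 1) →
      ∫⁻ x, φ x = ∫⁻ s in Set.Ioi (0:ℝ), volume {x | ENNReal.ofReal s < φ x} := by
    intro φ hφ hφ1
    have hne : ∀ x, φ x ≠ ∞ := fun x => ne_top_of_le_ne_top ENNReal.one_ne_top (hφ1 x)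
    have := lintegral_eq_lintegral_meas_lt volume (f := fun x => (φ x).toReal)
      (ae_of_all _ fun _ => ENNReal.toReal_nonneg) hφ.ennreal_toReal.aemeasurable
    simp only [ENNReal.ofReal_toReal (hne _)] at this
    rw [this]
    refine setLIntegral_congr_fun measurableSet_Ioi fun s hs => ?_
    simp only [ENNReal.ofReal_lt_iff_lt_toReal (le_of_lt hs) (hne _)]
  have hf_le : ∀ x, f x ≤ 1 := fun x => hf1 ▸ le_iSup f x
  have hg_le : ∀ x, g x ≤ 1 := fun x => hg1 ▸ le_iSup g x
  calc (ENNReal.ofReal (1 - t) * ∫⁻ x, f x) + ENNReal.ofReal t * ∫⁻ x, g x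
      = ∫⁻ s in Set.Ioi (0:ℝ), (ENNReal.ofReal (1 - t) * volume {x | ENNReal.ofReal s < f x}
          + ENNReal.ofReal t * volume {x | ENNReal.ofReal s < g x}) := by
        rw [layer f hf hf_le, layer g hg hg_le, lintegral_add_left', lintegral_const_mul',
          lintegral_const_mul'] <;> try simp
        refine Antitone.measurable ?_ |>.aemeasurable.const_mul _
        intro a b hab
        exact measure_mono fun x (hx : _ < _) => (ENNReal.ofReal_le_ofReal hab).trans_lt hx
    _ ≤ ∫⁻ s in Set.Ioi (0:ℝ), volume {x | ENNReal.ofReal s < min (h x) 1} := by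
        refine setLIntegral_mono' measurableSet_Ioi fun s hs => ?_
        rcases le_or_gt 1 s with h1 | h1
        · have e1 : {x | ENNReal.ofReal s < f x} = ∅ := by
            ext x; simp
            exact (hf_le x).trans (by simpa using h1)
          have e2 : {x | ENNReal.ofReal s < g x} = ∅ := by
            ext x; simp
            exact (hg_le x).trans (by simpa using h1)
          simp [e1, e2]
        have hs1 : ENNReal.ofReal s < 1 := by simpa using h1
        have s1 : ∀ (A : Set ℝ) (c : ℝ), 0 < c →
            ENNReal.ofReal c * volume A = volume (c • A) := by
          intro A c hc
          rw [Measure.addHaar_smul]; simp [abs_of_pos hc]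
        rw [s1 _ _ h1t, s1 _ _ ht0]
        apply volume_add_le_of_add_subset
        · exact (measurableSet_lt measurable_const hf).const_smul₀ _
        · exact (measurableSet_lt measurable_const hg).const_smul₀ _
        · obtain ⟨x, hx⟩ := lt_iSup_iff.1 (hf1.symm ▸ hs1)
          exact ⟨_, Set.smul_mem_smul_set hx⟩
        · obtain ⟨x, hx⟩ := lt_iSup_iff.1 (hg1.symm ▸ hs1)
          exact ⟨_, Set.smul_mem_smul_set hx⟩
        · rintro _ ⟨x, hx, rfl⟩ _ ⟨y, hy, rfl⟩
          simp only [Set.mem_ofPred_eq, smul_eq_mul, lt_min_iff] at hx hy ⊢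
          refine ⟨?_, hs1⟩
          refine lt_of_lt_of_le ?_ (hfgh x y)
          have hspos : 0 < s := hs
          calc ENNReal.ofReal s = ENNReal.ofReal s ^ (1 - t) * ENNReal.ofReal s ^ t := by
                rw [← ENNReal.rpow_add _ _ (by simpa using hspos) (by simp)]; simp
            _ < _ := ENNReal.mul_lt_mul (ENNReal.rpow_lt_rpow hx h1t)
                  (ENNReal.rpow_lt_rpow hy ht0)
    _ = ∫⁻ x, min (h x) 1 := (layer _ (hh.min measurable_const) fun x => min_le_right _ _).symm
    _ ≤ ∫⁻ x, h x := lintegral_mono fun x => min_le_left _ _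

lemma prekopa_one_dim_bounded {t : ℝ} (ht0 : 0 < t) (ht1 : t < 1) {f g h : ℝ → ℝ≥0∞}
    (hf : Measurable f) (hg : Measurable g) (hh : Measurable h)
    (hfb : ⨆ x, f x ≠ ∞) (hgb : ⨆ x, g x ≠ ∞)
    (hfgh : ∀ x y, f x ^ (1 - t) * g y ^ t ≤ h ((1 - t) * x + t * y)) :
    (∫⁻ x, f x) ^ (1 - t) * (∫⁻ x, g x) ^ t ≤ ∫⁻ x, h x := by
  have h1t : 0 < 1 - t := by linarith
  set a := ⨆ x, f x with ha
  set b := ⨆ x, g x with hb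
  rcases eq_or_ne a 0 with ha0 | ha0
  · have : ∀ x, f x = 0 := fun x => le_antisymm (ha0 ▸ le_iSup f x) bot_le
    simp [this, h1t]
  rcases eq_or_ne b 0 with hb0 | hb0
  · have : ∀ x, g x = 0 := fun x => le_antisymm (hb0 ▸ le_iSup g x) bot_le
    simp [this, ht0]
  have hai : a⁻¹ ≠ ∞ := by simpa using ha0
  have hbi : b⁻¹ ≠ ∞ := by simpa using hb0
  have hai0 : a⁻¹ ≠ 0 := by simpa using hfb
  have hbi0 : b⁻¹ ≠ 0 := by simpa using hgb
  have key := prekopa_one_dim_normalized ht0 ht1 (hf.const_mul a⁻¹) (hg.const_mul b⁻¹)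
    (hh.const_mul (a⁻¹ ^ (1 - t) * b⁻¹ ^ t))
    (by rw [← ENNReal.mul_iSup, ENNReal.inv_mul_cancel ha0 hfb])
    (by rw [← ENNReal.mul_iSup, ENNReal.inv_mul_cancel hb0 hgb])
    (by
      intro x y
      rw [ENNReal.mul_rpow_of_nonneg _ _ h1t.le, ENNReal.mul_rpow_of_nonneg _ _ ht0.le]
      calc _ = a⁻¹ ^ (1 - t) * b⁻¹ ^ t * (f x ^ (1 - t) * g y ^ t) := by ring
        _ ≤ _ := by gcongr; exact hfgh x y)
  rw [lintegral_const_mul _ hf, lintegral_const_mul _ hg, lintegral_const_mul _ hh,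
    ENNReal.mul_rpow_of_nonneg _ _ h1t.le, ENNReal.mul_rpow_of_nonneg _ _ ht0.le] at key
  have hc0 : a⁻¹ ^ (1 - t) * b⁻¹ ^ t ≠ 0 := by
    apply mul_ne_zero
    · simp [ENNReal.rpow_eq_zero_iff, hfb]; intro _; exact ht1.le
    · simp [ENNReal.rpow_eq_zero_iff, hgb, ht0.le]
  have hct : a⁻¹ ^ (1 - t) * b⁻¹ ^ t ≠ ∞ :=
    ENNReal.mul_ne_top (ENNReal.rpow_ne_top_of_nonneg h1t.le hai)
      (ENNReal.rpow_ne_top_of_nonneg ht0.le hbi)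
  refine (ENNReal.mul_le_mul_iff_right hc0 hct).1 ?_
  refine le_trans (le_of_eq ?_) key
  ring

lemma prekopa_one_dim {t : ℝ} (ht0 : 0 < t) (ht1 : t < 1) {f g h : ℝ → ℝ≥0∞}
    (hf : Measurable f) (hg : Measurable g) (hh : Measurable h)
    (hfgh : ∀ x y, f x ^ (1 - t) * g y ^ t ≤ h ((1 - t) * x + t * y)) :
    (∫⁻ x, f x) ^ (1 - t) * (∫⁻ x, g x) ^ t ≤ ∫⁻ x, h x := by
  have h1t : 0 < 1 - t := by linarith
  rcases eq_or_ne (∫⁻ x, f x) 0 with hf0 | hf0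
  · simp [hf0, h1t]
  rcases eq_or_ne (∫⁻ x, g x) 0 with hg0 | hg0
  · simp [hg0, ht0]
  have trunc : ∀ φ : ℝ → ℝ≥0∞, Measurable φ →
      Tendsto (fun M : ℕ => ∫⁻ x, min (φ x) M) atTop (nhds (∫⁻ x, φ x)) := by
    intro φ hφ
    refine lintegral_tendsto_of_tendsto_of_monotone
      (fun M => (hφ.min measurable_const).aemeasurable) ?_ ?_
    · refine ae_of_all _ fun x M M' hM => min_le_min_left _ (by exact_mod_cast hM)
    · refine ae_of_all _ fun x => ?_
      have : Tendsto (fun M : ℕ => min (φ x) (M : ℝ≥0∞)) atTop (nhds (min (φ x) ∞)) :=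
        tendsto_const_nhds.min ENNReal.tendsto_nat_nhds_top
      simpa using this
  refine le_of_tendsto' (ENNReal.Tendsto.mul ((ENNReal.continuous_rpow_const.tendsto _).comp (trunc f hf)) ?_
    ((ENNReal.continuous_rpow_const.tendsto _).comp (trunc g hg)) ?_) fun M => ?_
  · left; simp [ENNReal.rpow_eq_zero_iff, hf0]; intro _; exact ht1.le
  · left; simp [ENNReal.rpow_eq_zero_iff, hg0, ht0.le]
  · refine prekopa_one_dim_bounded ht0 ht1 (hf.min measurable_const) (hg.min measurable_const) hh
      ?_ ?_ ?_
    · exact ne_top_of_le_ne_top (ENNReal.natCast_ne_top M) (iSup_le fun x => min_le_right _ _)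
    · exact ne_top_of_le_ne_top (ENNReal.natCast_ne_top M) (iSup_le fun x => min_le_right _ _)
    · intro x y
      refine le_trans ?_ (hfgh x y)
      gcongr <;> exact min_le_left _ _

/-- Prékopa–Leindler inequality in `ℝⁿ`, by induction on the dimension via Fubini. -/
lemma prekopa {t : ℝ} (ht0 : 0 < t) (ht1 : t < 1) (n : ℕ) : ∀ {f g h : (Fin n → ℝ) → ℝ≥0∞},
    Measurable f → Measurable g → Measurable h →
    (∀ x y, f x ^ (1 - t) * g y ^ t ≤ h ((1 - t) • x + t • y)) →
    (∫⁻ x, f x) ^ (1 - t) * (∫⁻ x, g x) ^ t ≤ ∫⁻ x, h x := by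
  have h1t : 0 < 1 - t := by linarith
  induction n with
  | zero =>
    intro f g h hf hg hh hfgh
    have e : ∀ φ : (Fin 0 → ℝ) → ℝ≥0∞, ∫⁻ x, φ x = φ 0 := by
      intro φ
      rw [volume_pi, Measure.pi_of_empty _ 0]
      simp [lintegral_dirac]
    rw [e, e, e]
    simpa using hfgh 0 0
  | succ n ih =>
    intro f g h hf hg hh hfgh
    have mp := (volume_preserving_piFinSuccAbove (fun _ : Fin (n + 1) => ℝ) 0).symm
    have hsymm : ∀ p, (MeasurableEquiv.piFinSuccAbove (fun _ : Fin (n + 1) => ℝ) 0).symm p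
        = Fin.cons p.1 p.2 := by
      intro p
      ext i
      refine Fin.cases ?_ (fun i => ?_) i <;> simp [MeasurableEquiv.piFinSuccAbove]
    have e : ∀ φ : (Fin (n + 1) → ℝ) → ℝ≥0∞, Measurable φ →
        ∫⁻ x, φ x = ∫⁻ a : ℝ, ∫⁻ y : Fin n → ℝ, φ (Fin.cons a y) := by
      intro φ hφ
      rw [← mp.lintegral_comp hφ, Measure.volume_eq_prod, lintegral_prod]
      · simp only [hsymm]
      · exact (hφ.comp mp.measurable).aemeasurable
    have hcons : Measurable fun p : ℝ × (Fin n → ℝ) => (Fin.cons p.1 p.2 : Fin (n + 1) → ℝ) := by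
      simpa only [← hsymm] using mp.measurable
    rw [e f hf, e g hg, e h hh]
    refine prekopa_one_dim ht0 ht1 (hf.comp hcons).lintegral_prod_right'
      (hg.comp hcons).lintegral_prod_right' (hh.comp hcons).lintegral_prod_right' ?_
    intro a b
    refine ih (hf.comp (hcons.comp measurable_prodMk_left))
      (hg.comp (hcons.comp measurable_prodMk_left))
      (hh.comp (hcons.comp measurable_prodMk_left)) ?_
    intro x y
    refine (hfgh _ _).trans (le_of_eq ?_)
    congr 1
    ext i
    refine Fin.cases ?_ (fun i => ?_) i <;> simp

/-- The Brunn–Minkowski inequality in the form `vol ((1-t)A + tB) ≥ min (vol A) (vol B)`. -/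
lemma le_volume_of_combo {ι : Type*} [Fintype ι] {t : ℝ} (ht0 : 0 < t) (ht1 : t < 1)
    {A B C : Set (ι → ℝ)}
    (hA : MeasurableSet A) (hB : MeasurableSet B) (hC : MeasurableSet C)
    (h : ∀ a ∈ A, ∀ b ∈ B, (1 - t) • a + t • b ∈ C) {v : ℝ≥0∞}
    (hvA : v ≤ volume A) (hvB : v ≤ volume B) : v ≤ volume C := by
  have h1t : 0 < 1 - t := by linarith
  let e := Fintype.equivFin ι
  have mp := volume_measurePreserving_piCongrLeft (fun _ : ι => ℝ) e.symm
  set Φ := MeasurableEquiv.piCongrLeft (fun _ : ι => ℝ) e.symm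
  have hΦ : ∀ x i, Φ x i = x (e i) := by
    intro x i
    have := MeasurableEquiv.piCongrLeft_apply_apply e.symm (β := fun _ : ι => ℝ) x (e i)
    simpa using this
  rw [← mp.measure_preimage hA.nullMeasurableSet] at hvA
  rw [← mp.measure_preimage hB.nullMeasurableSet] at hvB
  rw [← mp.measure_preimage hC.nullMeasurableSet]
  have mA := mp.measurable hA
  have mB := mp.measurable hB
  have mC := mp.measurable hC
  have key := prekopa ht0 ht1 (Fintype.card ι) (f := (Φ ⁻¹' A).indicator 1)
    (g := (Φ ⁻¹' B).indicator 1) (h := (Φ ⁻¹' C).indicator 1)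
    (measurable_one.indicator mA) (measurable_one.indicator mB) (measurable_one.indicator mC) (by
      intro x y
      by_cases hx : x ∈ Φ ⁻¹' A
      · by_cases hy : y ∈ Φ ⁻¹' B
        · have : (1 - t) • x + t • y ∈ Φ ⁻¹' C := by
            have := h _ hx _ hy
            simp only [Set.mem_preimage]
            convert this using 1
            ext i
            simp [hΦ]
          simp [hx, hy, this]
        · simp [hy, ht0]
      · simp [hx, h1t])
  rw [lintegral_indicator_one mA, lintegral_indicator_one mB, lintegral_indicator_one mC] at key
  calc v = v ^ (1 - t) * v ^ t := by
        rw [← ENNReal.rpow_add_of_nonneg _ _ h1t.le ht0.le]; simp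
    _ ≤ _ := by gcongr
    _ ≤ _ := key

/-! ### Hausdorff measure of the unit cube -/

/-- The unit cube of Euclidean `d`-space. -/
def euCube (d : ℕ) : Set (EuclideanSpace ℝ (Fin d)) := {x | ∀ i, x i ∈ Set.Icc (0 : ℝ) 1}

/-- The (unnormalised) `d`-dimensional Hausdorff measure of the unit cube of Euclidean
`d`-space, i.e. the ratio between `μH[d]` and Lebesgue measure. -/
noncomputable def cubeConst (d : ℕ) : ℝ≥0∞ := μH[d] (euCube d)

lemma euCube_eq_preimage (d : ℕ) :
    euCube d = (MeasurableEquiv.toLp 2 (Fin d → ℝ)).symm ⁻¹' Set.Icc (0 : Fin d → ℝ) 1 := by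
  ext x
  simp only [euCube, Set.mem_preimage, Set.mem_Icc, Pi.le_def]
  exact ⟨fun h => ⟨fun i => (h i).1, fun i => (h i).2⟩, fun h i => ⟨h.1 i, h.2 i⟩⟩

lemma volume_euCube (d : ℕ) : volume (euCube d) = 1 := by
  rw [euCube_eq_preimage, (EuclideanSpace.volume_preserving_symm_measurableEquiv_toLp
    (Fin d)).measure_preimage measurableSet_Icc.nullMeasurableSet, Real.volume_Icc_pi]
  simp

lemma hausdorffMeasure_eq_cubeConst_smul (d : ℕ) :
    (μH[d] : Measure (EuclideanSpace ℝ (Fin d))) = cubeConst d • volume := by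
  obtain ⟨c, hc⟩ : ∃ c : NNReal, (μH[d] : Measure (EuclideanSpace ℝ (Fin d))) = c • volume :=
    ⟨_, Measure.isAddLeftInvariant_eq_smul _ _⟩
  have h2 : cubeConst d = c := by
    rw [cubeConst, hc, Measure.smul_apply, volume_euCube, ENNReal.smul_def, smul_eq_mul, mul_one]
  rw [h2]
  exact hc

lemma isCompact_euCube (d : ℕ) : IsCompact (euCube d) := by
  have : euCube d = (EuclideanSpace.equiv (Fin d) ℝ).toHomeomorph ⁻¹' Set.Icc (0 : Fin d → ℝ) 1 :=
    euCube_eq_preimage d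
  rw [this, Homeomorph.isCompact_preimage]
  exact isCompact_Icc

lemma cubeConst_ne_top (d : ℕ) : cubeConst d ≠ ∞ :=
  (isCompact_euCube d).measure_lt_top.ne

lemma one_le_cubeConst (d : ℕ) : 1 ≤ cubeConst d := by
  have h := (PiLp.lipschitzWith_ofLp 2 (fun _ : Fin d => ℝ)).hausdorffMeasure_image_le
    (d := d) (by positivity) (euCube d)
  have h1 : (WithLp.ofLp '' euCube d : Set (Fin d → ℝ)) = Set.Icc 0 1 := by
    rw [euCube_eq_preimage]
    exact Set.image_preimage_eq _ (MeasurableEquiv.toLp 2 (Fin d → ℝ)).symm.surjective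
  have h2 := hausdorffMeasure_pi_real (ι := Fin d)
  rw [Fintype.card_fin] at h2
  rw [h1, h2, Real.volume_Icc_pi] at h
  simpa [cubeConst] using h

lemma ediam_cylinder_le {d : ℕ} (t : Set (EuclideanSpace ℝ (Fin d))) (a b : ℝ) :
    Metric.ediam {y : EuclideanSpace ℝ (Fin (d + 1)) |
      (WithLp.toLp 2 fun i : Fin d => y i.succ) ∈ t ∧ y 0 ∈ Set.Icc a b} ≤
      Metric.ediam t + ENNReal.ofReal (b - a) := by
  refine Metric.ediam_le fun y hy z hz => ?_
  have h1 : edist (WithLp.toLp 2 fun i : Fin d => y i.succ)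
      (WithLp.toLp 2 fun i : Fin d => z i.succ) ≤ Metric.ediam t :=
    Metric.edist_le_ediam_of_mem hy.1 hz.1
  have h2 : edist (y 0) (z 0) ≤ ENNReal.ofReal (b - a) := by
    rw [edist_dist]
    apply ENNReal.ofReal_le_ofReal
    exact Real.dist_le_of_mem_Icc hy.2 hz.2
  refine le_trans ?_ (add_le_add h1 h2)
  rw [edist_dist, edist_dist, edist_dist, ← ENNReal.ofReal_add dist_nonneg dist_nonneg]
  apply ENNReal.ofReal_le_ofReal
  rw [EuclideanSpace.dist_eq, EuclideanSpace.dist_eq, Fin.sum_univ_succ]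
  apply Real.sqrt_le_iff.2
  constructor
  · positivity
  · have := Real.sq_sqrt (show 0 ≤ ∑ i : Fin d, dist (y i.succ) (z i.succ) ^ 2 by positivity)
    have h4 := Real.sqrt_nonneg (∑ i : Fin d, dist (y i.succ) (z i.succ) ^ 2)
    simp only at this h4 ⊢
    nlinarith [dist_nonneg (x := y 0) (y := z 0)]

/-- Stacking: a cover of the unit `d`-cube yields, by cutting the cylinder over each member into
slabs whose height is a `1/(d+1)` fraction of its diameter, a cover of the unit `(d+1)`-cube. -/
lemma exists_cover_euCube_succ {d : ℕ} (hd : 1 ≤ d) {κ : ℝ≥0∞} (hκ : cubeConst d < κ)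
    {r : ℝ} (hr : 0 < r) (hr1 : r ≤ 1) :
    ∃ (M : ℕ → ℕ) (u : (Σ i, Fin (M i)) → Set (EuclideanSpace ℝ (Fin (d + 1)))),
      euCube (d + 1) ⊆ ⋃ i, u i ∧ (∀ i, Metric.ediam (u i) ≤ ENNReal.ofReal (4 * r)) ∧
      ∑' i, Metric.ediam (u i) ^ ((d + 1 : ℕ) : ℝ) ≤
        6 * (d + 1) * (κ + ENNReal.ofReal (2 * r)) := by
  have hd' : (1 : ℝ) ≤ d := by exact_mod_cast hd
  have h0 := hκ
  rw [cubeConst, Measure.hausdorffMeasure_apply] at h0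
  have h1 := lt_of_le_of_lt (le_iSup₂ (f := fun (r : ℝ≥0∞) (_ : 0 < r) => _)
    (ENNReal.ofReal r) (by simpa using hr)) h0
  simp only [iInf_lt_iff] at h1
  obtain ⟨t, ht, htr, hsum⟩ := h1
  have hsum' : ∑' n, Metric.ediam (t n) ^ (d : ℝ) < κ := by
    refine lt_of_le_of_lt (ENNReal.tsum_le_tsum fun n => ?_) hsum
    rcases (t n).eq_empty_or_nonempty with h | h
    · simp [h]; omega
    · simp [h]
  set δ : ℕ → ℝ := fun n => max (Metric.ediam (t n)).toReal (r * 2⁻¹ ^ n) with hδ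
  have hδ0 : ∀ n, 0 < δ n := fun n => lt_max_of_lt_right (by positivity)
  have hfin : ∀ n, Metric.ediam (t n) ≠ ∞ := fun n =>
    ne_top_of_le_ne_top ENNReal.ofReal_ne_top (htr n)
  have hδr : ∀ n, δ n ≤ r := fun n => by
    apply max_le
    · exact ENNReal.toReal_le_of_le_ofReal hr.le (htr n)
    · exact mul_le_of_le_one_right hr.le (pow_le_one₀ (by norm_num) (by norm_num))
  have hδt : ∀ n, Metric.ediam (t n) ≤ ENNReal.ofReal (δ n) := fun n => by
    rw [← ENNReal.ofReal_toReal (hfin n)]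
    exact ENNReal.ofReal_le_ofReal (le_max_left _ _)
  have hδd : ∑' n, ENNReal.ofReal (δ n) ^ (d : ℝ) ≤ κ + ENNReal.ofReal (2 * r) := by
    have step : ∀ n, ENNReal.ofReal (δ n) ^ (d : ℝ) ≤
        Metric.ediam (t n) ^ (d : ℝ) + ENNReal.ofReal r * 2⁻¹ ^ n := by
      intro n
      rcases le_total (Metric.ediam (t n)).toReal (r * 2⁻¹ ^ n) with h | h
      · refine le_add_left ?_
        have : ENNReal.ofReal r * 2⁻¹ ^ n = ENNReal.ofReal (r * 2⁻¹ ^ n) := by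
          rw [ENNReal.ofReal_mul hr.le, ENNReal.ofReal_pow (by norm_num),
            ENNReal.ofReal_inv_of_pos (by norm_num)]
          simp
        rw [this, hδ]
        simp only [max_eq_right h]
        refine ENNReal.rpow_le_self_of_le_one ?_ hd'
        rw [ENNReal.ofReal_le_one]
        exact (mul_le_of_le_one_right hr.le (pow_le_one₀ (by norm_num) (by norm_num))).trans hr1
      · refine le_add_right ?_
        rw [hδ]
        simp only [max_eq_left h]
        rw [ENNReal.ofReal_toReal (hfin n)]
    refine (ENNReal.tsum_le_tsum step).trans ?_
    rw [ENNReal.tsum_add, ENNReal.tsum_mul_left, ENNReal.tsum_geometric_two,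
      mul_comm 2 r, ENNReal.ofReal_mul hr.le]
    gcongr
    simp
  set M : ℕ → ℕ := fun n => ⌈((d : ℝ) + 1) / δ n⌉₊ with hM
  refine ⟨M, fun p => {y | (WithLp.toLp 2 fun i : Fin d => y i.succ) ∈ t p.1 ∧
    y 0 ∈ Set.Icc ((p.2 : ℕ) * (δ p.1 / (d + 1))) (((p.2 : ℕ) + 1) * (δ p.1 / (d + 1)))},
    ?_, ?_, ?_⟩
  · intro y hy
    have hy' : (WithLp.toLp 2 fun i : Fin d => y i.succ) ∈ euCube d := fun i => hy i.succ
    obtain ⟨n, hn⟩ := Set.mem_iUnion.1 (ht hy')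
    have hy0 := hy 0
    set η := δ n / (d + 1) with hη
    have hη0 : 0 < η := div_pos (hδ0 n) (by positivity)
    have hMη : 1 ≤ M n * η := by
      have := Nat.le_ceil (((d : ℝ) + 1) / δ n)
      rw [div_le_iff₀ (hδ0 n)] at this
      rw [hη, mul_div_assoc', le_div_iff₀ (by positivity)]
      linarith
    have hM0 : 0 < M n := by
      by_contra h
      have : M n = 0 := by omega
      rw [this] at hMη
      norm_num at hMη
    -- the slab index; the top face `y 0 = M n * η` is put into the last slab
    by_cases hq : ⌊y 0 / η⌋₊ < M n
    · refine Set.mem_iUnion.2 ⟨⟨n, ⟨_, hq⟩⟩, hn, ?_, ?_⟩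
      · have := Nat.floor_le (div_nonneg hy0.1 hη0.le)
        rwa [le_div_iff₀ hη0] at this
      · have := (Nat.lt_floor_add_one (y 0 / η)).le
        rwa [div_le_iff₀ hη0] at this
    · refine Set.mem_iUnion.2 ⟨⟨n, ⟨M n - 1, by omega⟩⟩, hn, ?_, ?_⟩
      · have h1 : (M n : ℝ) ≤ y 0 / η := by
          have := Nat.floor_le (div_nonneg hy0.1 hη0.le)
          refine le_trans ?_ this
          exact_mod_cast not_lt.1 hq
        rw [le_div_iff₀ hη0] at h1
        refine le_trans ?_ h1
        simp only
        gcongr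
        omega
      · simp only
        rw [Nat.cast_sub (by omega)]
        simp only [Nat.cast_one, sub_add_cancel]
        exact hy0.2.trans hMη
  · rintro ⟨n, p⟩
    refine (ediam_cylinder_le _ _ _).trans ?_
    refine (add_le_add_left (htr n) _).trans ?_
    rw [← ENNReal.ofReal_add hr.le]
    · apply ENNReal.ofReal_le_ofReal
      have : δ n / (d + 1) ≤ r := (div_le_self (hδ0 n).le (by linarith)).trans (hδr n)
      simp only
      linarith
    · have : 0 < δ n / (d + 1) := div_pos (hδ0 n) (by positivity)
      simp only
      linarith
  · have piece : ∀ n (p : Fin (M n)),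
        Metric.ediam {y : EuclideanSpace ℝ (Fin (d + 1)) |
          (WithLp.toLp 2 fun i : Fin d => y i.succ) ∈ t n ∧
          y 0 ∈ Set.Icc ((p : ℕ) * (δ n / (d + 1))) (((p : ℕ) + 1) * (δ n / (d + 1)))}
          ^ ((d + 1 : ℕ) : ℝ) ≤ ENNReal.ofReal (3 * δ n ^ (d + 1)) := by
      intro n p
      have hη0 : 0 < δ n / (d + 1) := div_pos (hδ0 n) (by positivity)
      have h1 := (ediam_cylinder_le (t n) ((p : ℕ) * (δ n / (d + 1)))
        (((p : ℕ) + 1) * (δ n / (d + 1)))).trans (add_le_add_left (hδt n) _)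
      have e1 : ((p : ℕ) + 1 : ℝ) * (δ n / (d + 1)) - (p : ℕ) * (δ n / (d + 1)) = δ n / (d + 1) := by
        ring
      rw [e1, ← ENNReal.ofReal_add (hδ0 n).le hη0.le] at h1
      rw [ENNReal.rpow_natCast]
      refine (pow_le_pow_left' h1 _).trans ?_
      rw [← ENNReal.ofReal_pow (by have := hδ0 n; positivity)]
      apply ENNReal.ofReal_le_ofReal
      have e2 : δ n + δ n / (d + 1) = δ n * (1 / (d + 1) + 1) := by ring
      rw [e2, mul_pow, mul_comm]
      have h3 : (1 / ((d : ℝ) + 1) + 1) ^ (d + 1) ≤ 3 := by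
        calc (1 / ((d : ℝ) + 1) + 1) ^ (d + 1) ≤ (Real.exp (1 / (d + 1))) ^ (d + 1) := by
              gcongr
              exact Real.add_one_le_exp _
          _ = Real.exp 1 := by
              rw [← Real.exp_nat_mul]
              congr 1
              push_cast
              field_simp
          _ ≤ 3 := by linarith [Real.exp_one_lt_d9]
      have := hδ0 n
      gcongr
    rw [ENNReal.tsum_sigma (fun n (p : Fin (M n)) => Metric.ediam
      {y : EuclideanSpace ℝ (Fin (d + 1)) | (WithLp.toLp 2 fun i : Fin d => y i.succ) ∈ t n ∧
          y 0 ∈ Set.Icc ((p : ℕ) * (δ n / (d + 1))) (((p : ℕ) + 1) * (δ n / (d + 1)))}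
          ^ ((d + 1 : ℕ) : ℝ))]
    refine le_trans ?_ (mul_le_mul_right hδd _)
    rw [← ENNReal.tsum_mul_left]
    refine ENNReal.tsum_le_tsum fun n => ?_
    rw [tsum_fintype]
    refine (Finset.sum_le_sum fun p _ => piece n p).trans ?_
    rw [Finset.sum_const, Finset.card_univ, Fintype.card_fin, nsmul_eq_mul]
    have hMn : (M n : ℝ) * δ n ≤ 2 * (d + 1) := by
      have h1 : (M n : ℝ) < (d + 1) / δ n + 1 := Nat.ceil_lt_add_one
        (div_nonneg (by positivity) (hδ0 n).le)
      have h2 : (M n : ℝ) * δ n ≤ ((d + 1) / δ n + 1) * δ n :=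
        mul_le_mul_of_nonneg_right h1.le (hδ0 n).le
      have h3 : (((d : ℝ) + 1) / δ n + 1) * δ n = d + 1 + δ n := by
        rw [add_mul, div_mul_cancel₀ _ (hδ0 n).ne', one_mul]
      have h4 := (hδr n).trans hr1
      linarith
    have e3 : ENNReal.ofReal (δ n) ^ (d : ℝ) = ENNReal.ofReal (δ n ^ d) := by
      rw [ENNReal.rpow_natCast, ENNReal.ofReal_pow (hδ0 n).le]
    have e4 : (6 * ((d : ℝ≥0∞) + 1)) = ENNReal.ofReal (6 * (d + 1)) := by
      rw [ENNReal.ofReal_mul (by norm_num), ENNReal.ofReal_add (by positivity) (by norm_num)]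
      simp
    rw [e3, e4, ← ENNReal.ofReal_mul (by positivity), ← ENNReal.ofReal_natCast,
      ← ENNReal.ofReal_mul (by positivity)]
    apply ENNReal.ofReal_le_ofReal
    have h5 : 0 < δ n ^ d := pow_pos (hδ0 n) _
    calc (M n : ℝ) * (3 * δ n ^ (d + 1)) = (M n * δ n) * (3 * δ n ^ d) := by ring
      _ ≤ (2 * (d + 1)) * (3 * δ n ^ d) := by gcongr
      _ = _ := by ring

/-- Raising the dimension by one multiplies the Hausdorff measure of the unit cube by at most a
linear factor in the dimension. -/
lemma cubeConst_succ_le {d : ℕ} (hd : 1 ≤ d) :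
    cubeConst (d + 1) ≤ 6 * (d + 1) * cubeConst d := by
  have hc : (6 * ((d : ℝ≥0∞) + 1)) ≠ ∞ := by
    exact_mod_cast ENNReal.natCast_ne_top (6 * (d + 1))
  set r : ℕ → ℝ := fun j => 1 / ((j : ℝ) + 1) with hr
  have hr0 : ∀ j, 0 < r j := fun j => by positivity
  have hr1 : ∀ j, r j ≤ 1 := fun j => by
    rw [hr]; simp only; rw [div_le_one (by positivity)]; linarith [(Nat.cast_nonneg j : (0:ℝ) ≤ j)]
  have hrt : Tendsto r atTop (nhds 0) := tendsto_one_div_add_atTop_nhds_zero_nat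
  have ofr : ∀ c : ℝ, Tendsto (fun j => ENNReal.ofReal (c * r j)) atTop (nhds 0) := fun c => by
    have h := ENNReal.tendsto_ofReal (hrt.const_mul c)
    rwa [mul_zero, ENNReal.ofReal_zero] at h
  have h := fun j => exists_cover_euCube_succ hd (κ := cubeConst d + ENNReal.ofReal (1 * r j))
    (ENNReal.lt_add_right (cubeConst_ne_top d) (by simpa using hr0 j)) (hr0 j) (hr1 j)
  choose M u hu hdiam hsum using h
  have key := Measure.hausdorffMeasure_le_liminf_tsum ((d + 1 : ℕ) : ℝ) (euCube (d + 1)) (l := atTop)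
    (fun j => ENNReal.ofReal (4 * r j)) (ofr 4) u (Eventually.of_forall hdiam)
    (Eventually.of_forall hu)
  refine key.trans ?_
  refine (liminf_le_liminf (Eventually.of_forall hsum)).trans ?_
  have : Tendsto (fun j => 6 * ((d : ℝ≥0∞) + 1) * (cubeConst d + ENNReal.ofReal (1 * r j) +
      ENNReal.ofReal (2 * r j))) atTop (nhds (6 * (d + 1) * (cubeConst d + 0 + 0))) :=
    ENNReal.Tendsto.const_mul ((tendsto_const_nhds.add (ofr 1)).add (ofr 2)) (Or.inr hc)
  rw [this.liminf_eq]
  simp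

lemma cubeConst_add_le {d N : ℕ} (hd : 1 ≤ d) (k : ℕ) (hN : d + k ≤ N) :
    cubeConst (d + k) ≤ (6 * N) ^ k * cubeConst d := by
  induction k with
  | zero => simp
  | succ k ih =>
    rw [← add_assoc]
    refine (cubeConst_succ_le (by omega)).trans ?_
    rw [pow_succ', mul_assoc (6 * (N : ℝ≥0∞))]
    refine mul_le_mul' ?_ (ih (by omega))
    gcongr
    exact_mod_cast hN

/-- For a set `W` invariant under adding constants, the Hausdorff measure of its mean-zero slice
is computed from the Lebesgue measure of the slab `0 ≤ mean ≤ 1`. -/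
lemma hausdorffMeasure_slice {ι : Type*} [Fintype ι] {d : ℕ} (hcard : Fintype.card ι = d + 1)
    {W : Set (ι → ℝ)} (hWm : MeasurableSet W) (hW : ∀ x ∈ W, ∀ a : ℝ, (fun i => x i + a) ∈ W) :
    ENNReal.ofReal (√(d + 1)) * μH[d] ((EuclideanSpace.equiv ι ℝ).symm '' {x | ∑ i, x i = 0 ∧ x ∈ W}) =
      cubeConst d * volume {x | x ∈ W ∧ (∑ i, x i) / (d + 1) ∈ Set.Icc (0 : ℝ) 1} := by
  classical
  set N : ℝ := d + 1 with hN
  have hN0 : 0 < N := by positivity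
  have hcardN : (Fintype.card ι : ℝ) = N := by rw [hcard]; push_cast; rfl
  have hs0 : 0 < √N := Real.sqrt_pos.2 hN0
  have hss : √N * √N = N := Real.mul_self_sqrt hN0.le
  set one : EuclideanSpace ℝ ι := WithLp.toLp 2 (fun _ => (√N)⁻¹) with hone
  have honenorm : ‖one‖ = 1 := by
    rw [EuclideanSpace.norm_eq, hone]
    simp only [Finset.sum_const, Finset.card_univ, nsmul_eq_mul, hcardN]
    rw [Real.norm_of_nonneg (by positivity), Real.sqrt_eq_one, inv_pow, Real.sq_sqrt hN0.le,
      mul_inv_cancel₀ hN0.ne']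
  have hfr : Module.finrank ℝ (EuclideanSpace ℝ ι) = Fintype.card (Fin (d + 1)) := by
    simp [hcard]
  obtain ⟨b, hb⟩ := Orthonormal.exists_orthonormalBasis_extension_of_card_eq hfr
    (v := fun _ => one) (s := {(0 : Fin (d + 1))}) (by
      rw [orthonormal_subsingleton_iff]
      intro i
      exact honenorm)
  have hb0 : b 0 = one := hb 0 rfl
  have hinner : ∀ x : EuclideanSpace ℝ ι, b.repr x 0 = (∑ i, x i) / √N := by
    intro x
    rw [OrthonormalBasis.repr_apply_apply, hb0, hone, PiLp.inner_apply]
    simp [div_eq_mul_inv, Finset.sum_mul]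
  -- the isometric embedding onto the mean-zero hyperplane
  set J : EuclideanSpace ℝ (Fin d) → EuclideanSpace ℝ ι := fun c =>
    b.repr.symm (WithLp.toLp 2 (Fin.cons 0 (WithLp.ofLp c))) with hJ
  have hJiso : Isometry J := by
    refine b.repr.symm.isometry.comp ?_
    refine Isometry.of_dist_eq fun x y => ?_
    rw [EuclideanSpace.dist_eq, EuclideanSpace.dist_eq, Fin.sum_univ_succ]
    simp
  set P0 : Set (Fin d → ℝ) := {c | WithLp.ofLp (J (WithLp.toLp 2 c)) ∈ W} with hP0
  have hJm : Measurable fun c : Fin d → ℝ => WithLp.ofLp (J (WithLp.toLp 2 c)) :=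
    ((PiLp.continuous_ofLp 2 _).comp (hJiso.continuous.comp (PiLp.continuous_toLp 2 _))).measurable
  have hP0m : MeasurableSet P0 := hJm hWm
  have himg : (EuclideanSpace.equiv ι ℝ).symm '' {x | ∑ i, x i = 0 ∧ x ∈ W} =
      J '' (WithLp.ofLp ⁻¹' P0) := by
    ext y
    constructor
    · rintro ⟨x, ⟨hx0, hxW⟩, rfl⟩
      have h0 : b.repr (WithLp.toLp 2 x) 0 = 0 := by rw [hinner]; simp [hx0]
      have hJx : J (WithLp.toLp 2 fun i : Fin d => b.repr (WithLp.toLp 2 x) i.succ) =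
          WithLp.toLp 2 x := by
        rw [hJ]
        simp only
        rw [LinearIsometryEquiv.symm_apply_eq]
        ext i
        refine Fin.cases ?_ (fun i => ?_) i
        · simp [h0]
        · simp
      refine ⟨_, ?_, hJx⟩
      simp only [hP0, Set.mem_preimage, Set.mem_ofPred_eq]
      rw [WithLp.toLp_ofLp, hJx]
      exact hxW
    · rintro ⟨c, hc, rfl⟩
      refine ⟨WithLp.ofLp (J c), ⟨?_, hc⟩, rfl⟩
      have h0 := hinner (J c)
      simp only [hJ, LinearIsometryEquiv.apply_symm_apply, Fin.cons_zero] at h0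
      have := (div_eq_zero_iff.1 h0.symm).resolve_right hs0.ne'
      exact this
  have hleft : μH[d] ((EuclideanSpace.equiv ι ℝ).symm '' {x | ∑ i, x i = 0 ∧ x ∈ W}) =
      cubeConst d * volume P0 := by
    rw [himg, hJiso.hausdorffMeasure_image (Or.inl (by positivity)),
      hausdorffMeasure_eq_cubeConst_smul, Measure.smul_apply, smul_eq_mul]
    congr 1
    exact (EuclideanSpace.volume_preserving_symm_measurableEquiv_toLp
      (Fin d)).measure_preimage hP0m.nullMeasurableSet
  set Q : Set (ι → ℝ) := {x | x ∈ W ∧ (∑ i, x i) / N ∈ Set.Icc (0 : ℝ) 1} with hQ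
  have hQm : MeasurableSet Q := by
    refine hWm.inter (measurableSet_Icc.preimage ?_)
    fun_prop
  have hright : volume Q = ENNReal.ofReal √N * volume P0 := by
    have mp : MeasurePreserving (fun p : ℝ × (Fin d → ℝ) =>
        WithLp.ofLp (b.repr.symm (WithLp.toLp 2
          ((MeasurableEquiv.piFinSuccAbove (fun _ => ℝ) (0 : Fin (d + 1))).symm p))))
        volume volume :=
      (EuclideanSpace.volume_preserving_symm_measurableEquiv_toLp ι).comp
        (b.measurePreserving_repr_symm.comp
        ((EuclideanSpace.volume_preserving_symm_measurableEquiv_toLp (Fin (d + 1))).symm.comp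
          ((volume_preserving_piFinSuccAbove (fun _ : Fin (d + 1) => ℝ) 0).symm)))
    rw [← mp.measure_preimage hQm.nullMeasurableSet]
    have hset : (fun p : ℝ × (Fin d → ℝ) =>
        WithLp.ofLp (b.repr.symm (WithLp.toLp 2
          ((MeasurableEquiv.piFinSuccAbove (fun _ => ℝ) (0 : Fin (d + 1))).symm p)))) ⁻¹' Q =
        Set.Icc 0 √N ×ˢ P0 := by
      ext ⟨a, c⟩
      have e1 : (MeasurableEquiv.piFinSuccAbove (fun _ => ℝ) (0 : Fin (d + 1))).symm (a, c) =
          Fin.cons a c := by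
        ext i
        refine Fin.cases ?_ (fun i => ?_) i <;> simp [MeasurableEquiv.piFinSuccAbove]
      have e2 : WithLp.toLp 2 (Fin.cons a c : Fin (d + 1) → ℝ) =
          EuclideanSpace.single 0 a + WithLp.toLp 2 (Fin.cons 0 c) := by
        ext i
        refine Fin.cases ?_ (fun i => ?_) i
        · simp
        · simp
      have e3 : WithLp.ofLp (b.repr.symm (WithLp.toLp 2 (Fin.cons a c : Fin (d + 1) → ℝ))) =
          fun i => WithLp.ofLp (J (WithLp.toLp 2 c)) i + a * (√N)⁻¹ := by
        rw [e2, map_add]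
        have : b.repr.symm (EuclideanSpace.single 0 a) = a • one := by
          rw [← hb0, ← b.repr_symm_single, ← map_smul]
          congr 1
          ext i
          simp
        rw [this]
        ext i
        simp [hJ, hone, add_comm]
      have e4 : (∑ i, (WithLp.ofLp (J (WithLp.toLp 2 c)) i + a * (√N)⁻¹)) / N = a / √N := by
        have h0 := hinner (J (WithLp.toLp 2 c))
        simp only [hJ, LinearIsometryEquiv.apply_symm_apply, Fin.cons_zero] at h0
        have h1 := (div_eq_zero_iff.1 h0.symm).resolve_right hs0.ne'
        rw [Finset.sum_add_distrib]
        simp only [hJ]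
        rw [h1, Finset.sum_const, Finset.card_univ, nsmul_eq_mul, hcardN]
        field_simp
        ring
      simp only [Set.mem_preimage, hQ, Set.mem_ofPred_eq, Set.mem_prod]
      rw [e1, e3, e4, Set.mem_Icc, Set.mem_Icc, div_le_one hs0, le_div_iff₀ hs0, zero_mul, and_comm]
      refine and_congr_right fun _ => ?_
      constructor
      · intro h
        have := hW _ h (-(a * (√N)⁻¹))
        simpa [hP0] using this
      · intro h
        exact hW _ h _
    rw [hset, Measure.volume_eq_prod, Measure.prod_prod, Real.volume_Icc, sub_zero]
  rw [hleft, hright]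
  ring

/-! ### The polytope in symmetric coordinates -/

/-- Functions on the torus `ZMod m × ZMod n` satisfying the three families of rhombus
inequalities, in the coordinates `(k, l) ↔ k + l (1 + ω)`; in these coordinates the second and
third families are exchanged by the coordinate swap. -/
def torW (m n : ℕ) (s₁ s₂ : ℝ) : Set (ZMod m × ZMod n → ℝ) :=
  {x | ∀ k l, x (k + 1, l) + x (k, l + 1) - x (k, l) - x (k + 1, l + 1) ≤ 2 ∧
    x (k + 1, l) + x (k + 1, l + 1) - x (k, l + 1) - x (k + 2, l) ≤ s₁ ∧
    x (k, l + 1) + x (k + 1, l + 1) - x (k + 1, l) - x (k, l + 2) ≤ s₂}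

/-- The volume of the slab `0 ≤ x (0, 0) ≤ 1` of `torW m n s₁ s₂`. -/
noncomputable def torV (m n : ℕ) [NeZero m] [NeZero n] (s₁ s₂ : ℝ) : ℝ≥0∞ :=
  volume {x | x ∈ torW m n s₁ s₂ ∧ x (0, 0) ∈ Set.Icc (0 : ℝ) 1}

/-! ### Volume bookkeeping -/

lemma measurePreserving_comp_equiv {α β : Type*} [Fintype α] [Fintype β] (e : α ≃ β) :
    MeasurePreserving (fun x : β → ℝ => fun a => x (e a)) volume volume := by
  have := volume_measurePreserving_piCongrLeft (fun _ : α => ℝ) e.symm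
  convert this using 1
  ext x a
  simp [MeasurableEquiv.piCongrLeft, Equiv.piCongrLeft]

/-- The volume of a slab `0 ≤ φ ≤ 1` of a set invariant under adding constants does not depend on
the normalised linear functional `φ`: two slabs are related by a transvection. -/
lemma volume_slab_eq {α : Type*} [Fintype α] {W : Set (α → ℝ)}
    (hW : ∀ x ∈ W, ∀ a : ℝ, (fun i => x i + a) ∈ W) (φ ψ : (α → ℝ) →ₗ[ℝ] ℝ)
    (hφ : φ (fun _ => 1) = 1) (hψ : ψ (fun _ => 1) = 1) :
    volume {x | x ∈ W ∧ φ x ∈ Set.Icc (0 : ℝ) 1} = volume {x | x ∈ W ∧ ψ x ∈ Set.Icc (0 : ℝ) 1} := by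
  set T := LinearMap.transvection (ψ - φ) (fun _ => (1 : ℝ)) with hT
  have hdet : LinearMap.det T = 1 := by
    rw [hT, LinearMap.transvection.det]
    simp [hφ, hψ]
  have h := Measure.addHaar_preimage_linearMap (volume : Measure (α → ℝ)) (f := T)
    (by rw [hdet]; exact one_ne_zero) {x | x ∈ W ∧ φ x ∈ Set.Icc (0 : ℝ) 1}
  rw [hdet] at h
  simp only [inv_one, abs_one, ENNReal.ofReal_one, one_mul] at h
  rw [← h]
  congr 1
  ext x
  have e1 : T x = fun i => x i + (ψ x - φ x) := by
    ext i
    simp [hT, LinearMap.transvection.apply]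
  have e2 : φ (T x) = ψ x := by
    rw [hT, LinearMap.transvection.apply]
    simp [hφ]
  simp only [Set.mem_preimage, Set.mem_ofPred_eq]
  rw [e2]
  refine and_congr_left fun _ => ?_
  constructor
  · intro hx
    rw [e1] at hx
    have := hW _ hx (-(ψ x - φ x))
    simpa only [add_neg_cancel_right] using this
  · intro hx
    rw [e1]
    exact hW _ hx _

lemma torW_add_const {m n : ℕ} {s₁ s₂ : ℝ} :
    ∀ x ∈ torW m n s₁ s₂, ∀ a : ℝ, (fun i => x i + a) ∈ torW m n s₁ s₂ := by
  intro x hx a k l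
  obtain ⟨h1, h2, h3⟩ := hx k l
  refine ⟨?_, ?_, ?_⟩ <;> simp only <;> linarith

lemma isClosed_torW (m n : ℕ) (s₁ s₂ : ℝ) : IsClosed (torW m n s₁ s₂) := by
  have : torW m n s₁ s₂ = ⋂ k, ⋂ l,
      {x | x (k + 1, l) + x (k, l + 1) - x (k, l) - x (k + 1, l + 1) ≤ 2} ∩
      ({x | x (k + 1, l) + x (k + 1, l + 1) - x (k, l + 1) - x (k + 2, l) ≤ s₁} ∩
      {x | x (k, l + 1) + x (k + 1, l + 1) - x (k + 1, l) - x (k, l + 2) ≤ s₂}) := by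
    ext x
    simp [torW]
  rw [this]
  refine isClosed_iInter fun k => isClosed_iInter fun l => ?_
  refine (isClosed_le (by fun_prop) (by fun_prop)).inter
    ((isClosed_le (by fun_prop) (by fun_prop)).inter (isClosed_le (by fun_prop) (by fun_prop)))

lemma convex_torW (m n : ℕ) (s₁ s₂ : ℝ) : Convex ℝ (torW m n s₁ s₂) := by
  intro x hx y hy a b ha hb hab k l
  obtain ⟨h1, h2, h3⟩ := hx k l
  obtain ⟨g1, g2, g3⟩ := hy k l
  simp only [Pi.add_apply, Pi.smul_apply, smul_eq_mul]
  have hb' : b = 1 - a := by linarith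
  refine ⟨?_, ?_, ?_⟩
  · have := add_le_add (mul_le_mul_of_nonneg_left h1 ha) (mul_le_mul_of_nonneg_left g1 hb)
    subst hb'; linarith
  · have := add_le_add (mul_le_mul_of_nonneg_left h2 ha) (mul_le_mul_of_nonneg_left g2 hb)
    subst hb'; linarith
  · have := add_le_add (mul_le_mul_of_nonneg_left h3 ha) (mul_le_mul_of_nonneg_left g3 hb)
    subst hb'; linarith

lemma torW_swap {m n : ℕ} {s₁ s₂ : ℝ} (x : ZMod m × ZMod n → ℝ) :
    (fun p : ZMod n × ZMod m => x (p.2, p.1)) ∈ torW n m s₂ s₁ ↔ x ∈ torW m n s₁ s₂ := by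
  constructor
  · intro h k l
    obtain ⟨h1, h2, h3⟩ := h l k
    refine ⟨?_, ?_, ?_⟩ <;> simp only at h1 h2 h3 <;> linarith
  · intro h k l
    obtain ⟨h1, h2, h3⟩ := h l k
    refine ⟨?_, ?_, ?_⟩ <;> simp only <;> linarith

lemma torV_swap (m n : ℕ) [NeZero m] [NeZero n] (s₁ s₂ : ℝ) :
    torV m n s₁ s₂ = torV n m s₂ s₁ := by
  have h := measurePreserving_comp_equiv (Equiv.prodComm (ZMod n) (ZMod m))
  have hm : MeasurableSet {x | x ∈ torW n m s₂ s₁ ∧ x (0, 0) ∈ Set.Icc (0 : ℝ) 1} :=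
    (isClosed_torW _ _ _ _).measurableSet.inter (measurableSet_Icc.preimage (by fun_prop))
  rw [torV, torV, ← h.measure_preimage hm.nullMeasurableSet]
  congr 1
  ext x
  simp only [Set.mem_preimage, Set.mem_ofPred_eq]
  rw [← torW_swap x]
  rfl

/-- The linear functional `x ↦ mean x`. -/
noncomputable def meanL (α : Type*) [Fintype α] : (α → ℝ) →ₗ[ℝ] ℝ :=
  (Fintype.card α : ℝ)⁻¹ • ∑ i, LinearMap.proj i

lemma meanL_apply {α : Type*} [Fintype α] (x : α → ℝ) :
    meanL α x = (∑ i, x i) / Fintype.card α := by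
  simp [meanL, div_eq_inv_mul]

lemma torV_eq_mean (m n : ℕ) [NeZero m] [NeZero n] (s₁ s₂ : ℝ) :
    torV m n s₁ s₂ =
      volume {x | x ∈ torW m n s₁ s₂ ∧ meanL (ZMod m × ZMod n) x ∈ Set.Icc (0 : ℝ) 1} := by
  refine volume_slab_eq torW_add_const (LinearMap.proj (0, 0)) (meanL _) (by simp) ?_
  rw [meanL_apply]
  simp [NeZero.ne m, NeZero.ne n]

/-- The change of lattice basis `(k, l) ↦ k + l (1 + ω)`. -/
def shearEquiv (n : ℕ) : ZMod n × ZMod n ≃ ZMod n × ZMod n where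
  toFun p := (p.1 + p.2, p.2)
  invFun p := (p.1 - p.2, p.2)
  left_inv p := by simp
  right_inv p := by simp

lemma hess_iff_torW {n : ℕ} {s : Fin 3 → ℝ} (hs : s 0 = 2) (x : ZMod n × ZMod n → ℝ) :
    (∀ r v, hess n r x v ≤ s r) ↔ (fun p => x (shearEquiv n p)) ∈ torW n n (s 1) (s 2) := by
  have e0 : ∀ k l : ZMod n, hess n 0 x (k + l, l) = x (k + 1 + l, l) + x (k + (l + 1), l + 1)
      - x (k + l, l) - x (k + 1 + (l + 1), l + 1) := by
    intro k l
    have a1 : (k + l, l) + ((1, 0) : ZMod n × ZMod n) = (k + 1 + l, l) := by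
      ext <;> simp; ring
    have a2 : (k + l, l) + ((2, 1) : ZMod n × ZMod n) = (k + 1 + (l + 1), l + 1) := by
      ext <;> simp; ring
    have a3 : (k + l, l) + ((1, 1) : ZMod n × ZMod n) = (k + (l + 1), l + 1) := by
      ext <;> simp; ring
    simp only [hess, if_true, a1, a2, a3]
    ring
  have e1 : ∀ k l : ZMod n, hess n 1 x (k + 2 + l, l) = x (k + 1 + l, l) +
      x (k + 1 + (l + 1), l + 1) - x (k + (l + 1), l + 1) - x (k + 2 + l, l) := by
    intro k l
    have a1 : (k + 2 + l, l) + ((0, 1) : ZMod n × ZMod n) = (k + 1 + (l + 1), l + 1) := by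
      ext <;> simp; ring
    have a2 : (k + 2 + l, l) + ((-1, 1) : ZMod n × ZMod n) = (k + (l + 1), l + 1) := by
      ext <;> simp; ring
    have a3 : (k + 2 + l, l) + ((-1, 0) : ZMod n × ZMod n) = (k + 1 + l, l) := by
      ext <;> simp; ring
    simp only [hess, a1, a2, a3]
    rw [if_neg (by decide), if_pos trivial]
    ring
  have e2 : ∀ k l : ZMod n, hess n 2 x (k + (l + 2), l + 2) = x (k + (l + 1), l + 1) +
      x (k + 1 + (l + 1), l + 1) - x (k + 1 + l, l) - x (k + (l + 2), l + 2) := by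
    intro k l
    have a1 : (k + (l + 2), l + 2) + ((-1, -1) : ZMod n × ZMod n) = (k + (l + 1), l + 1) := by
      ext <;> simp <;> ring
    have a2 : (k + (l + 2), l + 2) + ((-1, -2) : ZMod n × ZMod n) = (k + 1 + l, l) := by
      ext <;> simp; ring
    have a3 : (k + (l + 2), l + 2) + ((0, -1) : ZMod n × ZMod n) = (k + 1 + (l + 1), l + 1) := by
      ext <;> simp <;> ring
    simp only [hess, a1, a2, a3]
    rw [if_neg (by decide), if_neg (by decide)]
    ring
  constructor
  · intro h k l
    refine ⟨?_, ?_, ?_⟩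
    · have := h 0 (k + l, l)
      rw [e0, hs] at this
      exact this
    · have := h 1 (k + 2 + l, l)
      rw [e1] at this
      exact this
    · have := h 2 (k + (l + 2), l + 2)
      rw [e2] at this
      exact this
  · rintro h r ⟨i, j⟩
    fin_cases r
    · have := (h (i - j) j).1
      have e := e0 (i - j) j
      rw [sub_add_cancel] at e
      show hess n 0 x (i, j) ≤ s 0
      rw [e, hs]
      have t : i - j + j = i := sub_add_cancel _ _
      simpa [shearEquiv, t] using this
    · have := (h (i - j - 2) j).2.1
      have e := e1 (i - j - 2) j
      have t : i - j - 2 + 2 + j = i := by ring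
      rw [t] at e
      show hess n 1 x (i, j) ≤ s 1
      rw [e]
      simpa [shearEquiv, t] using this
    · have := (h (i - j) (j - 2)).2.2
      have e := e2 (i - j) (j - 2)
      have t : i - j + (j - 2 + 2) = i := by ring
      have t' : j - 2 + 2 = j := by ring
      rw [t, t'] at e
      show hess n 2 x (i, j) ≤ s 2
      rw [e]
      simpa [shearEquiv, t, t'] using this

/-- The Hausdorff volume of `polyP n s`, expressed through `torV`. -/
lemma hausdorffMeasure_polyP (n : ℕ) [NeZero n] {s : Fin 3 → ℝ} (hs : s 0 = 2) :
    n * μH[(n : ℝ) ^ 2 - 1] ((EuclideanSpace.equiv (ZMod n × ZMod n) ℝ).symm '' polyP n s) =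
      cubeConst (n ^ 2 - 1) * torV n n (s 1) (s 2) := by
  have hn : 1 ≤ n := NeZero.one_le
  have hn2 : 1 ≤ n ^ 2 := Nat.one_le_pow _ _ hn
  have hd : ((n ^ 2 - 1 : ℕ) : ℝ) + 1 = (n : ℝ) ^ 2 := by
    rw [Nat.cast_sub hn2]; push_cast; ring
  have hcard : Fintype.card (ZMod n × ZMod n) = (n ^ 2 - 1) + 1 := by
    rw [Fintype.card_prod, ZMod.card, Nat.sub_add_cancel hn2]; ring
  have hc := measurePreserving_comp_equiv (shearEquiv n)
  set W : Set (ZMod n × ZMod n → ℝ) := {x | (fun p => x (shearEquiv n p)) ∈ torW n n (s 1) (s 2)}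
    with hW
  have hWm : MeasurableSet W := hc.measurable (isClosed_torW _ _ _ _).measurableSet
  have key := hausdorffMeasure_slice hcard hWm
    (fun x hx a => torW_add_const (fun p => x (shearEquiv n p)) hx a)
  rw [hd, Real.sqrt_sq (by positivity), ENNReal.ofReal_natCast,
    show ((n ^ 2 - 1 : ℕ) : ℝ) = (n : ℝ) ^ 2 - 1 by linarith] at key
  have e1 : polyP n s = {x | ∑ i, x i = 0 ∧ x ∈ W} := by
    ext x
    exact and_congr_right fun _ => hess_iff_torW hs x
  rw [e1, key, torV_eq_mean]
  congr 1
  have hm : MeasurableSet {x | x ∈ torW n n (s 1) (s 2) ∧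
      meanL (ZMod n × ZMod n) x ∈ Set.Icc (0 : ℝ) 1} := by
    refine (isClosed_torW _ _ _ _).measurableSet.inter (measurableSet_Icc.preimage ?_)
    exact (LinearMap.continuous_of_finiteDimensional _).measurable
  rw [← hc.measure_preimage hm.nullMeasurableSet]
  congr 1
  ext x
  simp only [Set.mem_preimage, Set.mem_ofPred_eq, meanL_apply]
  rw [Equiv.sum_comp (shearEquiv n) x, hcard]
  push_cast
  rw [hd]
  rfl

/-! ### Functions on a cycle with one-sided bounded increments -/

/-- On a cycle, a one-sided bound on the steps bounds the oscillation: any vertex is reached from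
any other by moving forward. -/
lemma cyclic_sub_le {n : ℕ} [NeZero n] {f : ZMod n → ℝ} {c : ℝ} (hc : 0 ≤ c)
    (hf : ∀ l, f l - f (l + 1) ≤ c) (l l' : ZMod n) : f l - f l' ≤ c * n := by
  have step : ∀ j : ℕ, f l - f (l + j) ≤ c * j := by
    intro j
    induction j with
    | zero => simp
    | succ j ih =>
      have := hf (l + j)
      push_cast
      rw [← add_assoc]
      linarith
  have h := step (l' - l).val
  rw [ZMod.natCast_zmod_val, add_sub_cancel] at h
  refine h.trans (mul_le_mul_of_nonneg_left ?_ hc)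
  exact_mod_cast (ZMod.val_lt _).le

lemma abs_sub_mean_le {α : Type*} [Fintype α] [Nonempty α] {f : α → ℝ} {c : ℝ}
    (hf : ∀ l l', f l - f l' ≤ c) (l : α) : |f l - meanL α f| ≤ c := by
  have hN : (0 : ℝ) < Fintype.card α := by exact_mod_cast Fintype.card_pos
  have h1 : ∑ l', (f l - f l') ≤ Fintype.card α * c := by
    have := Finset.sum_le_card_nsmul (Finset.univ : Finset α) (fun l' => f l - f l') c
      fun l' _ => hf l l'
    simpa using this
  have h2 : ∑ l', (f l' - f l) ≤ Fintype.card α * c := by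
    have := Finset.sum_le_card_nsmul (Finset.univ : Finset α) (fun l' => f l' - f l) c
      fun l' _ => hf l' l
    simpa using this
  simp only [Finset.sum_sub_distrib, Finset.sum_const, Finset.card_univ, nsmul_eq_mul] at h1 h2
  have e : f l - meanL α f = (Fintype.card α * f l - ∑ i, f i) / Fintype.card α := by
    rw [meanL_apply]
    field_simp
  rw [e, abs_le, le_div_iff₀ hN, div_le_iff₀ hN]
  constructor <;> linarith

lemma cyclic_abs_le {n : ℕ} [NeZero n] {f : ZMod n → ℝ} {c : ℝ} (hc : 0 ≤ c)
    (hf : ∀ l, f l - f (l + 1) ≤ c) (h0 : ∑ l, f l = 0) (l : ZMod n) : |f l| ≤ c * n := by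
  have := abs_sub_mean_le (cyclic_sub_le hc hf) l
  rwa [meanL_apply, h0, zero_div, sub_zero] at this

lemma torW_diff_sub_le {m n : ℕ} {s₁ s₂ : ℝ} [NeZero m] {x : ZMod m × ZMod n → ℝ}
    (hx : x ∈ torW m n s₁ s₂) (l : ZMod n) (k k' : ZMod m) :
    (x (k, l + 1) - x (k, l)) - (x (k', l + 1) - x (k', l)) ≤ 2 * m :=
  cyclic_sub_le (f := fun k => x (k, l + 1) - x (k, l)) (by norm_num)
    (fun k => by have := (hx k l).1; linarith) k k'

lemma torW_diff_abs_le {m n : ℕ} {s₁ s₂ : ℝ} [NeZero n] {x : ZMod m × ZMod n → ℝ}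
    (hs₂ : 0 ≤ s₂) (hx : x ∈ torW m n s₁ s₂) (l : ZMod n) (k : ZMod m) :
    |x (k, l + 1) - x (k, l)| ≤ (2 + s₂) * n := by
  refine cyclic_abs_le (f := fun l => x (k, l + 1) - x (k, l)) (by linarith) (fun l => ?_) ?_ l
  · have h1 := (hx k l).1
    have h2 := (hx k l).2.2
    have e : l + 1 + 1 = l + 2 := by ring
    simp only [e]
    linarith
  · rw [Finset.sum_sub_distrib, sub_eq_zero]
    exact Equiv.sum_comp (Equiv.addRight (1 : ZMod n)) (fun l => x (k, l))

/-! ### Symmetrization -/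

/-- If a convex set `Q` is invariant under a cyclic group of coordinate permutations which permutes
two families `ℓ 0`, `ℓ 1` of bounded functionals, then a non-negligible part of `Q` lies where each
family is almost constant. Some cell of a fine grid catches a large part of `Q`; the set of cell
centres catching at least that much is convex by Brunn–Minkowski and invariant, so it contains
the average of an orbit. -/
lemma volume_le_symmetrize {α : Type*} [Fintype α] {m : ℕ} [NeZero m] {Q : Set (α → ℝ)}
    (hQm : MeasurableSet Q) (hQc : Convex ℝ Q) (ℓ : Fin 2 → ZMod m → (α → ℝ) →ₗ[ℝ] ℝ)
    (σ : ZMod m → Equiv.Perm α) (hσQ : ∀ j, ∀ x ∈ Q, (fun i => x (σ j i)) ∈ Q)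
    (hσℓ : ∀ j a k x, ℓ a k (fun i => x (σ j i)) = ℓ a (k + j) x) {N : ℕ} (hN : 1 ≤ N)
    (hR : ∀ x ∈ Q, ∀ a k, |ℓ a k x| ≤ 2 * N) :
    volume Q ≤ (8 * N ^ 2 + 1) ^ (2 * m) *
      volume {x | x ∈ Q ∧ ∀ a k k', |ℓ a k x - ℓ a k' x| ≤ 1 / N} := by
  classical
  have hN0 : (0 : ℝ) < N := by exact_mod_cast hN
  set K : (Fin 2 × ZMod m → ℝ) → Set (α → ℝ) :=
    fun c => {x | x ∈ Q ∧ ∀ a k, |ℓ a k x - c (a, k)| ≤ 1 / (2 * N)} with hK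
  have hℓc : ∀ a k, Continuous (ℓ a k) := fun a k => LinearMap.continuous_of_finiteDimensional _
  have hKm : ∀ c, MeasurableSet (K c) := by
    intro c
    have : K c = Q ∩ ⋂ a, ⋂ k, {x | |ℓ a k x - c (a, k)| ≤ 1 / (2 * N)} := by
      ext x
      simp only [hK, Set.mem_ofPred_eq, Set.mem_inter_iff, Set.mem_iInter]
    rw [this]
    refine hQm.inter (MeasurableSet.iInter fun a => MeasurableSet.iInter fun k => ?_)
    exact (isClosed_le (((hℓc a k).sub continuous_const).abs) continuous_const).measurableSet
  set grid : Finset (Fin 2 × ZMod m → ℤ) :=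
    Fintype.piFinset fun _ => Finset.Icc (-(4 * N ^ 2 : ℤ)) (4 * N ^ 2) with hgrid
  have hcardgrid : grid.card = (8 * N ^ 2 + 1) ^ (2 * m) := by
    rw [hgrid, Fintype.card_piFinset]
    simp only [Int.card_Icc, Finset.prod_const, Finset.card_univ, Fintype.card_prod,
      Fintype.card_fin, ZMod.card]
    congr 1
    have : (4 * (N : ℤ) ^ 2 + 1 - -(4 * N ^ 2)) = ((8 * N ^ 2 + 1 : ℕ) : ℤ) := by push_cast; ring
    rw [this, Int.toNat_natCast]
  have hcover : Q ⊆ ⋃ z ∈ grid, K (fun i => z i / (2 * N)) := by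
    intro x hx
    refine Set.mem_biUnion (x := fun i => ⌊ℓ i.1 i.2 x * (2 * N)⌋) ?_ ⟨hx, fun a k => ?_⟩
    · rw [hgrid]
      simp only [Finset.mem_coe, Fintype.mem_piFinset, Finset.mem_Icc]
      rintro ⟨a, k⟩
      have := abs_le.1 (hR x hx a k)
      constructor
      · rw [Int.le_floor]
        push_cast
        nlinarith
      · have h1 := Int.floor_le (ℓ a k x * (2 * N))
        have h2 : ((⌊ℓ a k x * (2 * N)⌋ : ℤ) : ℝ) ≤ ((4 * N ^ 2 : ℤ) : ℝ) := by
          push_cast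
          nlinarith
        exact_mod_cast h2
    · have h1 := Int.floor_le (ℓ a k x * (2 * N))
      have h2 := Int.lt_floor_add_one (ℓ a k x * (2 * N))
      have e : ℓ a k x - (⌊ℓ a k x * (2 * N)⌋ : ℝ) / (2 * N) =
          (ℓ a k x * (2 * N) - ⌊ℓ a k x * (2 * N)⌋) / (2 * N) := by
        field_simp
      rw [e, abs_div, abs_of_pos (show (0 : ℝ) < 2 * N by positivity)]
      gcongr
      rw [abs_le]
      constructor <;> linarith
  have hgne : grid.Nonempty := by
    rw [← Finset.card_pos, hcardgrid]
    positivity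
  obtain ⟨z, hz, hzmax⟩ := Finset.exists_max_image grid
    (fun z => volume (K (fun i => z i / (2 * N)))) hgne
  set c₀ : Fin 2 × ZMod m → ℝ := fun i => z i / (2 * N) with hc₀
  have hbig : volume Q ≤ (8 * N ^ 2 + 1) ^ (2 * m) * volume (K c₀) := by
    refine (measure_mono hcover).trans ((measure_biUnion_finset_le _ _).trans ?_)
    refine (Finset.sum_le_card_nsmul _ _ _ fun z hz => hzmax z hz).trans ?_
    rw [hcardgrid, nsmul_eq_mul]
    push_cast
    exact le_rfl
  set G : Set (Fin 2 × ZMod m → ℝ) := {c | volume (K c₀) ≤ volume (K c)} with hG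
  have hGconv : Convex ℝ G := by
    rw [convex_iff_forall_pos]
    intro c hc c' hc' a b ha hb hab
    have ha' : a = 1 - b := by linarith
    refine le_volume_of_combo hb (by linarith) (hKm c) (hKm c') (hKm _) ?_ hc hc'
    rintro x ⟨hxQ, hx⟩ y ⟨hyQ, hy⟩
    rw [← ha']
    refine ⟨hQc hxQ hyQ ha.le hb.le hab, fun e k => ?_⟩
    have e1 : ℓ e k (a • x + b • y) - (a • c + b • c') (e, k) =
        a * (ℓ e k x - c (e, k)) + b * (ℓ e k y - c' (e, k)) := by
      simp only [map_add, map_smul, Pi.add_apply, Pi.smul_apply, smul_eq_mul]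
      ring
    rw [e1]
    refine (abs_add_le _ _).trans ?_
    rw [abs_mul, abs_mul, abs_of_pos ha, abs_of_pos hb]
    have h1 := mul_le_mul_of_nonneg_left (hx e k) ha.le
    have h2 := mul_le_mul_of_nonneg_left (hy e k) hb.le
    rw [ha'] at h1 ⊢
    linarith
  have hGtrans : ∀ j, (fun i : Fin 2 × ZMod m => c₀ (i.1, i.2 + j)) ∈ G := by
    intro j
    rw [hG, Set.mem_ofPred_eq, ← (measurePreserving_comp_equiv (σ j)).measure_preimage
      (hKm (fun i => c₀ (i.1, i.2 + j))).nullMeasurableSet]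
    refine measure_mono ?_
    rintro x ⟨hxQ, hx⟩
    refine ⟨hσQ j x hxQ, fun a k => ?_⟩
    rw [hσℓ]
    exact hx a (k + j)
  have hm0 : (0 : ℝ) < m := by exact_mod_cast NeZero.pos m
  have havg : (∑ j : ZMod m, (m : ℝ)⁻¹ • (fun i : Fin 2 × ZMod m => c₀ (i.1, i.2 + j))) ∈ G := by
    refine hGconv.sum_mem (fun _ _ => by positivity) ?_ fun j _ => hGtrans j
    rw [Finset.sum_const, Finset.card_univ, ZMod.card, nsmul_eq_mul, mul_inv_cancel₀ hm0.ne']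
  refine hbig.trans (mul_le_mul_right (le_trans havg (measure_mono ?_)) _)
  rintro x ⟨hxQ, hx⟩
  refine ⟨hxQ, fun a k k' => ?_⟩
  have hconst : ∀ k, (∑ j : ZMod m, (m : ℝ)⁻¹ • (fun i : Fin 2 × ZMod m => c₀ (i.1, i.2 + j))) (a, k)
      = ∑ j : ZMod m, (m : ℝ)⁻¹ * c₀ (a, j) := by
    intro k
    rw [Finset.sum_apply]
    simp only [Pi.smul_apply, smul_eq_mul]
    exact Equiv.sum_comp (Equiv.addLeft k) (fun j => (m : ℝ)⁻¹ * c₀ (a, j))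
  have h1 := hx a k
  have h2 := hx a k'
  rw [hconst] at h1 h2
  have h3 : (1 : ℝ) / N = 1 / (2 * N) + 1 / (2 * N) := by field_simp; norm_num
  rw [h3]
  rw [abs_le] at h1 h2 ⊢
  constructor <;> linarith [h1.1, h1.2, h2.1, h2.2]

/-! ### Removing one row -/

/-- The corrected restriction to the kept rows `0, …, n - 1`: a contraction, plus a linear term
spreading half of the jump between the two new neighbours over all rows, plus a concave profile
that makes room for the new rhombi across the seam. -/
noncomputable def seamMap (m n : ℕ) (s₂ : ℝ) (y : ZMod m × ZMod n → ℝ) (p : ZMod m × ZMod n) : ℝ :=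
  (1 - 3 / n) * (y p + (y (0, 0) - y (0, ((n - 1 : ℕ) : ZMod n))) / (2 * n) * p.2.val) +
    3 / n * s₂ * (p.2.val * (n - 1 - p.2.val)) / 2

/-- If the increments around the last row are almost constant along it, deleting that row and
applying `seamMap` produces an element of the polytope of the torus with one row fewer. -/
lemma seamMap_mem {m n : ℕ} [NeZero n] (hn : 12 ≤ n) {s₁ s₂ η : ℝ}
    (hs₁ : 2 ≤ s₁) (hs₂ : 2 ≤ s₂) (hη : 0 ≤ η) (hηn : η ≤ 1 / n)
    {x : ZMod m × ZMod (n + 1) → ℝ} (hx : x ∈ torW m (n + 1) s₁ s₂)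
    (h1 : ∀ k k', (x (k, (n : ZMod (n + 1))) - x (k, ((n - 1 : ℕ) : ZMod (n + 1)))) -
      (x (k', (n : ZMod (n + 1))) - x (k', ((n - 1 : ℕ) : ZMod (n + 1)))) ≤ η)
    (h2 : ∀ k k', (x (k, 0) - x (k, (n : ZMod (n + 1)))) -
      (x (k', 0) - x (k', (n : ZMod (n + 1)))) ≤ η) :
    seamMap m n s₂ (fun p => x (p.1, (p.2.val : ZMod (n + 1)))) ∈ torW m n s₁ s₂ := by
  set X : ℕ → ZMod m → ℝ := fun j k => x (k, (j : ZMod (n + 1))) with hX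
  have hnR : (12 : ℝ) ≤ n := by exact_mod_cast hn
  have hn0 : (0 : ℝ) < n := by linarith
  set ε : ℝ := 3 / n with hε
  have hεn : ε * n = 3 := by rw [hε]; field_simp
  have hε0 : 0 < ε := by positivity
  have hε1 : ε ≤ 1 / 4 := by nlinarith
  have hηε : η ≤ ε := hηn.trans (by rw [hε]; gcongr; norm_num)
  have hA : ∀ j k, X j (k + 1) + X (j + 1) k - X j k - X (j + 1) (k + 1) ≤ 2 := fun j k => by
    have := (hx k j).1
    simpa [hX] using this
  have hB : ∀ j k, X j (k + 1) + X (j + 1) (k + 1) - X (j + 1) k - X j (k + 2) ≤ s₁ := fun j k => by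
    have := (hx k j).2.1
    simpa [hX] using this
  have hC : ∀ j k, X (j + 1) k + X (j + 1) (k + 1) - X j (k + 1) - X (j + 2) k ≤ s₂ := fun j k => by
    have := (hx k j).2.2
    simpa [hX] using this
  have hXn : X (n + 1) = X 0 := by
    ext k
    simp only [hX]
    rw [ZMod.natCast_self, Nat.cast_zero]
  have hXn2 : X (n + 2) = X 1 := by
    ext k
    simp only [hX]
    congr 2
    have : ((n + 2 : ℕ) : ZMod (n + 1)) = ((n + 1 : ℕ) : ZMod (n + 1)) + 1 := by push_cast; ring
    rw [this, ZMod.natCast_self]; simp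
  have h1' : ∀ k k', (X n k - X (n - 1) k) - (X n k' - X (n - 1) k') ≤ η := fun k k' => h1 k k'
  have h2' : ∀ k k', (X 0 k - X n k) - (X 0 k' - X n k') ≤ η := fun k k' => by
    have := h2 k k'
    simpa [hX] using this
  set w : ℝ := X 0 0 - X (n - 1) 0 with hw
  set Y : ℕ → ZMod m → ℝ := fun j k =>
    (1 - ε) * (X j k + w / (2 * n) * j) + ε * s₂ * (j * (n - 1 - j)) / 2 with hY
  have hseam : ∀ k (l : ZMod n), seamMap m n s₂ (fun p => x (p.1, (p.2.val : ZMod (n + 1)))) (k, l)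
      = Y l.val k := by
    intro k l
    have hv : ((n - 1 : ℕ) : ZMod n).val = n - 1 := by
      rw [ZMod.val_natCast, Nat.mod_eq_of_lt (by omega)]
    simp only [seamMap, hY, hw, hX, hv, ZMod.val_zero]
    rfl
  have hcast : ((n - 1 : ℕ) : ℝ) = n - 1 := by rw [Nat.cast_sub (by omega)]; simp
  have hcast2 : ((n - 2 : ℕ) : ℝ) = n - 2 := by rw [Nat.cast_sub (by omega)]; simp
  -- the drift of the two removed increments is controlled by the inequality across row `n`
  have hdrift : (X n 0 - X (n - 1) 0) - (X 0 0 - X n 0) ≤ s₂ + η := by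
    have a := hC (n - 1) 0
    rw [show n - 1 + 1 = n by omega, show n - 1 + 2 = n + 1 by omega, hXn] at a
    have b := h1' 0 (0 + 1)
    linarith
  have hθ0 : 0 ≤ 1 - ε := by linarith
  intro k l
  have hl : l.val < n := ZMod.val_lt l
  have hl1 : (l + 1).val = (l.val + 1) % n := by
    conv_lhs => rw [← ZMod.natCast_zmod_val l]
    rw [← Nat.cast_one, ← Nat.cast_add, ZMod.val_natCast]
  have hl2 : (l + 2).val = (l.val + 2) % n := by
    conv_lhs => rw [← ZMod.natCast_zmod_val l]
    rw [← Nat.cast_two, ← Nat.cast_add, ZMod.val_natCast]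
  simp only [hseam, hl1, hl2]
  generalize l.val = j at hl
  have hw' : w / (2 * n) * n = w / 2 := by field_simp
  -- the bound shared by the two vertical rhombi that cross the seam
  have hcross : ∀ q : ℝ, q ≤ s₂ + η + (s₂ + η) / 2 →
      (1 - ε) * q - ε * s₂ * (n - 2) / 2 ≤ s₂ := by
    intro q hq
    have a := mul_le_mul_of_nonneg_left hq hθ0
    have b : ε * s₂ * (n - 2) / 2 = s₂ * (3 - 2 * ε) / 2 := by rw [← hεn]; ring
    have hη1 : η ≤ 1 / 4 := hηε.trans hε1
    have c : (1 - ε) * η ≤ η := by nlinarith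
    rw [b]
    nlinarith
  refine ⟨?_, ?_, ?_⟩
  · rcases Nat.lt_or_ge (j + 1) n with hj | hj
    · rw [Nat.mod_eq_of_lt hj]
      have e : Y j (k + 1) + Y (j + 1) k - Y j k - Y (j + 1) (k + 1) =
          (1 - ε) * (X j (k + 1) + X (j + 1) k - X j k - X (j + 1) (k + 1)) := by
        simp only [hY]; ring
      rw [e]
      have := mul_le_mul_of_nonneg_left (hA j k) hθ0
      linarith
    · have hj' : j = n - 1 := by omega
      subst hj'
      rw [show n - 1 + 1 = n by omega, Nat.mod_self]
      have e : Y (n - 1) (k + 1) + Y 0 k - Y (n - 1) k - Y 0 (k + 1) =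
          (1 - ε) * (X (n - 1) (k + 1) + X 0 k - X (n - 1) k - X 0 (k + 1)) := by
        simp only [hY]; ring
      rw [e]
      have a : X (n - 1) (k + 1) + X 0 k - X (n - 1) k - X 0 (k + 1) ≤ 2 * η := by
        linarith [h1' k (k + 1), h2' k (k + 1)]
      have := mul_le_mul_of_nonneg_left a hθ0
      nlinarith
  · rcases Nat.lt_or_ge (j + 1) n with hj | hj
    · rw [Nat.mod_eq_of_lt hj]
      have e : Y j (k + 1) + Y (j + 1) (k + 1) - Y (j + 1) k - Y j (k + 2) =
          (1 - ε) * (X j (k + 1) + X (j + 1) (k + 1) - X (j + 1) k - X j (k + 2)) := by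
        simp only [hY]; ring
      rw [e]
      have := mul_le_mul_of_nonneg_left (hB j k) hθ0
      nlinarith
    · have hj' : j = n - 1 := by omega
      subst hj'
      have b := hB (n - 1) k
      rw [show n - 1 + 1 = n by omega] at b ⊢
      rw [Nat.mod_self]
      have e : Y (n - 1) (k + 1) + Y 0 (k + 1) - Y 0 k - Y (n - 1) (k + 2) =
          (1 - ε) * (X (n - 1) (k + 1) + X 0 (k + 1) - X 0 k - X (n - 1) (k + 2)) := by
        simp only [hY]; ring
      rw [e]
      have a : X (n - 1) (k + 1) + X 0 (k + 1) - X 0 k - X (n - 1) (k + 2) ≤ s₁ + η := by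
        linarith [h2' (k + 1) k]
      have := mul_le_mul_of_nonneg_left a hθ0
      nlinarith
  · rcases Nat.lt_or_ge (j + 2) n with hj | hj
    · rw [Nat.mod_eq_of_lt hj, Nat.mod_eq_of_lt (show j + 1 < n by omega)]
      have e : Y (j + 1) k + Y (j + 1) (k + 1) - Y j (k + 1) - Y (j + 2) k =
          (1 - ε) * (X (j + 1) k + X (j + 1) (k + 1) - X j (k + 1) - X (j + 2) k) + ε * s₂ := by
        simp only [hY]; push_cast; ring
      rw [e]
      have := mul_le_mul_of_nonneg_left (hC j k) hθ0
      nlinarith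
    · rcases Nat.lt_or_ge (j + 1) n with hj2 | hj2
      · have hj' : j = n - 2 := by omega
        subst hj'
        have c := hC (n - 2) k
        rw [show n - 2 + 1 = n - 1 by omega, show n - 2 + 2 = n by omega] at c ⊢
        rw [Nat.mod_self, Nat.mod_eq_of_lt (show n - 1 < n by omega)]
        have e : Y (n - 1) k + Y (n - 1) (k + 1) - Y (n - 2) (k + 1) - Y 0 k =
            (1 - ε) * (X (n - 1) k + X (n - 1) (k + 1) - X (n - 2) (k + 1) - X 0 k +
              w / (2 * n) * n) - ε * s₂ * (n - 2) / 2 := by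
          simp only [hY, hcast, hcast2]; push_cast; ring
        rw [e, hw']
        apply hcross
        have := h2' 0 k
        linarith
      · have hj' : j = n - 1 := by omega
        subst hj'
        have c := hC n k
        rw [hXn, hXn2] at c
        rw [show n - 1 + 1 = n by omega, show n - 1 + 2 = 1 + n by omega, Nat.mod_self,
          Nat.add_mod_right, Nat.mod_eq_of_lt (show 1 < n by omega)]
        have e : Y 0 k + Y 0 (k + 1) - Y (n - 1) (k + 1) - Y 1 k =
            (1 - ε) * (X 0 k + X 0 (k + 1) - X (n - 1) (k + 1) - X 1 k -
              w / (2 * n) * n) - ε * s₂ * (n - 2) / 2 := by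
          simp only [hY, hcast]; push_cast; ring
        rw [e, hw']
        apply hcross
        have := h1' (k + 1) 0
        linarith

lemma volume_prod_le {α β : Type*} [Fintype α] [Fintype β] {S : Set ((α → ℝ) × (β → ℝ))}
    (hS : MeasurableSet S) {B : Set (β → ℝ)} (hB : MeasurableSet B) {c : ℝ≥0∞}
    (h1 : ∀ r y, (r, y) ∈ S → y ∈ B) (h2 : ∀ y, volume {r | (r, y) ∈ S} ≤ c) :
    volume S ≤ c * volume B := by
  rw [Measure.volume_eq_prod, Measure.prod_apply_symm hS]
  calc ∫⁻ y, volume ((fun r => (r, y)) ⁻¹' S) ≤ ∫⁻ y, B.indicator (fun _ => c) y := by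
        refine lintegral_mono fun y => ?_
        by_cases hy : y ∈ B
        · rw [Set.indicator_of_mem hy]
          exact h2 y
        · rw [Set.indicator_of_notMem hy]
          have : (fun r => (r, y)) ⁻¹' S = ∅ := by
            ext r
            simpa using fun h => hy (h1 r y h)
          rw [this, measure_empty]
    _ = c * volume B := by rw [lintegral_indicator_const hB]

/-- A thin tube around a translate of the constants: one coordinate is confined to length `2 L`,
the others to length at most `1` once it is known. -/
lemma volume_row_slice_le {m : ℕ} [NeZero m] {L η a : ℝ} (hη : η ≤ 1 / 2) (b : ZMod m → ℝ) :
    volume {r : ZMod m → ℝ | |r 0 - a| ≤ L ∧ ∀ k, |r k - r 0 - b k| ≤ η} ≤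
      ENNReal.ofReal (2 * L) := by
  classical
  set T := LinearMap.transvection (LinearMap.proj 0 : (ZMod m → ℝ) →ₗ[ℝ] ℝ)
    (fun k => if k = 0 then (0 : ℝ) else -1) with hT
  have hdet : LinearMap.det T = 1 := by
    rw [hT, LinearMap.transvection.det]
    simp
  set lo : ZMod m → ℝ := fun k => if k = 0 then a - L else b k - η
  set hi : ZMod m → ℝ := fun k => if k = 0 then a + L else b k + η
  have h := Measure.addHaar_preimage_linearMap (volume : Measure (ZMod m → ℝ)) (f := T)
    (by rw [hdet]; exact one_ne_zero) (Set.Icc lo hi)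
  rw [hdet, Real.volume_Icc_pi] at h
  simp only [inv_one, abs_one, ENNReal.ofReal_one, one_mul] at h
  have hsub : {r : ZMod m → ℝ | |r 0 - a| ≤ L ∧ ∀ k, |r k - r 0 - b k| ≤ η} ⊆
      T ⁻¹' Set.Icc lo hi := by
    rintro r ⟨h0, hr⟩
    have hTr : ∀ k, T r k = if k = 0 then r 0 else r k - r 0 := by
      intro k
      rw [hT, LinearMap.transvection.apply]
      by_cases hk : k = 0 <;> simp [hk, sub_eq_add_neg]
    rw [abs_le] at h0
    refine ⟨fun k => ?_, fun k => ?_⟩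
    · rw [hTr]
      have := abs_le.1 (hr k)
      by_cases hk : k = 0 <;> simp only [lo, hk, if_true, if_false] <;> linarith
    · rw [hTr]
      have := abs_le.1 (hr k)
      by_cases hk : k = 0 <;> simp only [hi, hk, if_true, if_false] <;> linarith
  refine (measure_mono hsub).trans ?_
  rw [h, ← Finset.mul_prod_erase _ _ (Finset.mem_univ (0 : ZMod m))]
  have e0 : hi 0 - lo 0 = 2 * L := by simp [hi, lo]; ring
  rw [e0]
  refine mul_le_of_le_one_right' (Finset.prod_le_one' fun k hk => ?_)
  have hk0 : k ≠ 0 := (Finset.mem_erase.1 hk).1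
  simp only [hi, lo, hk0, if_false]
  rw [ENNReal.ofReal_le_one]
  linarith

/-- `seamMap` is a translate of a scaled transvection, so its determinant is explicit:
`(1 - 3 / n) ^ (m n)` times a factor at least `1 / 2`. -/
lemma volume_preimage_seamMap_le {m n : ℕ} [NeZero m] [NeZero n] (hn : 12 ≤ n) (s₂ : ℝ)
    (S : Set (ZMod m × ZMod n → ℝ)) :
    volume (seamMap m n s₂ ⁻¹' S) ≤ ENNReal.ofReal (2 * 3 ^ (6 * m)) * volume S := by
  have hnR : (12 : ℝ) ≤ n := by exact_mod_cast hn
  have hn0 : (0 : ℝ) < n := by linarith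
  set f : (ZMod m × ZMod n → ℝ) →ₗ[ℝ] ℝ := (1 / (2 * (n : ℝ))) •
    ((LinearMap.proj (0, 0) : (ZMod m × ZMod n → ℝ) →ₗ[ℝ] ℝ) -
      (LinearMap.proj (0, ((n - 1 : ℕ) : ZMod n)) : (ZMod m × ZMod n → ℝ) →ₗ[ℝ] ℝ)) with hf
  set v : ZMod m × ZMod n → ℝ := fun p => p.2.val with hv
  set h : ZMod m × ZMod n → ℝ :=
    fun p => 3 / n * s₂ * (p.2.val * (n - 1 - p.2.val)) / 2 with hh
  set θ : ℝ := 1 - 3 / n with hθ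
  have hε : 3 / (n : ℝ) ≤ 1 / 4 := by rw [div_le_iff₀ hn0]; linarith
  have hε0 : 0 < 3 / (n : ℝ) := by positivity
  have hθ0 : 0 < θ := by rw [hθ]; linarith
  set T := θ • LinearMap.transvection f v with hT
  have hseam : ∀ y, seamMap m n s₂ y = T y + h := by
    intro y
    ext p
    simp only [seamMap, hT, hh, hf, hv, hθ, LinearMap.smul_apply, LinearMap.transvection.apply,
      Pi.add_apply, Pi.smul_apply, smul_eq_mul, LinearMap.sub_apply, LinearMap.proj_apply]
    ring
  have hfv : f v = -((n - 1) / (2 * n)) := by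
    have hval : ((n - 1 : ℕ) : ZMod n).val = n - 1 := by
      rw [ZMod.val_natCast, Nat.mod_eq_of_lt (by omega)]
    simp only [hf, hv, LinearMap.smul_apply, LinearMap.sub_apply, LinearMap.proj_apply, hval,
      ZMod.val_zero, smul_eq_mul]
    rw [Nat.cast_sub (by omega)]
    push_cast
    ring
  have hfv1 : 1 / 2 ≤ 1 + f v := by
    have : ((n : ℝ) - 1) / (2 * n) ≤ 1 / 2 := by
      rw [div_le_div_iff₀ (by positivity) (by norm_num)]
      linarith
    rw [hfv]
    linarith
  have hdet : LinearMap.det T = θ ^ (m * n) * (1 + f v) := by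
    rw [hT, LinearMap.det_smul, LinearMap.transvection.det]
    simp [ZMod.card]
  have hdet0 : 0 < LinearMap.det T := by
    rw [hdet]
    have : 0 < 1 + f v := by linarith
    positivity
  have hpre : seamMap m n s₂ ⁻¹' S = T ⁻¹' ((fun y => y + h) ⁻¹' S) := by
    ext y
    simp only [Set.mem_preimage, hseam]
  rw [hpre, Measure.addHaar_preimage_linearMap _ hdet0.ne', measure_preimage_add_right]
  refine mul_le_mul_left (ENNReal.ofReal_le_ofReal ?_) _
  rw [abs_of_pos (inv_pos.2 hdet0), hdet, mul_inv, mul_comm]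
  refine mul_le_mul ?_ ?_ (by positivity) (by norm_num)
  · rw [inv_le_comm₀ (by linarith) (by norm_num)]
    linarith
  · have h1 : θ⁻¹ ≤ Real.exp (6 / n) := by
      rw [inv_le_iff_one_le_mul₀ hθ0]
      have h2 : 6 / (n : ℝ) + 1 ≤ Real.exp (6 / n) := Real.add_one_le_exp _
      have h3 : 6 / (n : ℝ) = 2 * (3 / n) := by ring
      rw [h3] at h2 ⊢
      have h4 := mul_le_mul_of_nonneg_left h2 hθ0.le
      have h5 : 1 ≤ θ * (2 * (3 / n) + 1) := by rw [hθ]; nlinarith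
      linarith [mul_comm θ (Real.exp (2 * (3 / n)))]
    calc (θ ^ (m * n))⁻¹ = (θ⁻¹) ^ (m * n) := by rw [inv_pow]
      _ ≤ Real.exp (6 / n) ^ (m * n) := by gcongr
      _ = Real.exp 1 ^ (6 * m) := by
          rw [← Real.exp_nat_mul, ← Real.exp_nat_mul]
          congr 1
          push_cast
          field_simp
      _ ≤ 3 ^ (6 * m) := by
          gcongr
          linarith [Real.exp_one_lt_d9]

/-- The splitting of the vertices of the `m × (n+1)` torus into the last row and the rest. -/
noncomputable def rowEquiv (m n : ℕ) [NeZero m] [NeZero n] :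
    ZMod m ⊕ (ZMod m × ZMod n) ≃ ZMod m × ZMod (n + 1) :=
  Equiv.ofBijective
    (Sum.elim (fun k => (k, (n : ZMod (n + 1)))) (fun p => (p.1, (p.2.val : ZMod (n + 1))))) (by
    rw [Fintype.bijective_iff_injective_and_card]
    have hval : ∀ j, j < n + 1 → ((j : ℕ) : ZMod (n + 1)).val = j := fun j hj => by
      rw [ZMod.val_natCast, Nat.mod_eq_of_lt hj]
    have hinj : ∀ i j, i < n + 1 → j < n + 1 → ((i : ℕ) : ZMod (n + 1)) = ((j : ℕ) : ZMod (n + 1)) →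
        i = j := fun i j hi hj h => by
      rw [← hval i hi, ← hval j hj, h]
    constructor
    · rintro (k | ⟨k, l⟩) (k' | ⟨k', l'⟩) h
      · simp only [Sum.elim_inl, Prod.mk.injEq, and_true] at h
        rw [h]
      · simp only [Sum.elim_inl, Sum.elim_inr, Prod.mk.injEq] at h
        have hl := ZMod.val_lt l'
        have := hinj _ _ (by omega) (by omega) h.2
        omega
      · simp only [Sum.elim_inl, Sum.elim_inr, Prod.mk.injEq] at h
        have hl := ZMod.val_lt l
        have := hinj _ _ (by omega) (by omega) h.2
        omega
      · simp only [Sum.elim_inr, Prod.mk.injEq] at h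
        have hl := ZMod.val_lt l
        have hl' := ZMod.val_lt l'
        have := hinj _ _ (by omega) (by omega) h.2
        rw [h.1, ZMod.val_injective n this]
    · simp [ZMod.card]
      ring)

lemma measurePreserving_rowEquiv (m n : ℕ) [NeZero m] [NeZero n] :
    MeasurePreserving (fun p : (ZMod m → ℝ) × (ZMod m × ZMod n → ℝ) =>
      fun q => Sum.elim p.1 p.2 ((rowEquiv m n).symm q)) volume volume := by
  have h1 := volume_measurePreserving_sumPiEquivProdPi_symm
    (fun _ : ZMod m ⊕ (ZMod m × ZMod n) => ℝ)
  have h2 := (measurePreserving_comp_equiv (rowEquiv m n).symm).comp h1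
  convert h2 using 1
  ext p q
  simp only [Function.comp]
  rcases (rowEquiv m n).symm q with a | a <;> rfl

/-- The part of `torW m (n+1) s₁ s₂` on which the two rows of increments around the row to be
removed vary by at most `η`. -/
def flatW (m n : ℕ) (s₁ s₂ η : ℝ) : Set (ZMod m × ZMod (n + 1) → ℝ) :=
  {x | x ∈ torW m (n + 1) s₁ s₂ ∧
    (∀ k k', |(x (k, (n : ZMod (n + 1))) - x (k, ((n - 1 : ℕ) : ZMod (n + 1)))) -
      (x (k', (n : ZMod (n + 1))) - x (k', ((n - 1 : ℕ) : ZMod (n + 1))))| ≤ η) ∧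
    ∀ k k', |(x (k, 0) - x (k, (n : ZMod (n + 1)))) -
      (x (k', 0) - x (k', (n : ZMod (n + 1))))| ≤ η}

lemma isClosed_flatW (m n : ℕ) (s₁ s₂ η : ℝ) : IsClosed (flatW m n s₁ s₂ η) := by
  have : flatW m n s₁ s₂ η = torW m (n + 1) s₁ s₂ ∩
      ((⋂ k, ⋂ k', {x | |(x (k, (n : ZMod (n + 1))) - x (k, ((n - 1 : ℕ) : ZMod (n + 1)))) -
      (x (k', (n : ZMod (n + 1))) - x (k', ((n - 1 : ℕ) : ZMod (n + 1))))| ≤ η}) ∩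
      ⋂ k, ⋂ k', {x | |(x (k, 0) - x (k, (n : ZMod (n + 1)))) -
      (x (k', 0) - x (k', (n : ZMod (n + 1))))| ≤ η}) := by
    ext x
    simp only [flatW, Set.mem_ofPred_eq, Set.mem_inter_iff, Set.mem_iInter]
  rw [this]
  refine (isClosed_torW _ _ _ _).inter (IsClosed.inter ?_ ?_) <;>
    exact isClosed_iInter fun k => isClosed_iInter fun k' =>
      isClosed_le (by fun_prop) (by fun_prop)

lemma flatW_add_const {m n : ℕ} {s₁ s₂ η : ℝ} :
    ∀ x ∈ flatW m n s₁ s₂ η, ∀ a : ℝ, (fun i => x i + a) ∈ flatW m n s₁ s₂ η := by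
  rintro x ⟨h0, h1, h2⟩ a
  refine ⟨torW_add_const x h0 a, fun k k' => ?_, fun k k' => ?_⟩
  · simpa only [add_sub_add_right_eq_sub] using h1 k k'
  · have h := h2 k k'
    simpa only [add_sub_add_right_eq_sub] using h

/-- Translation invariance along the rows and symmetrization: a non-negligible part of the slab
is almost flat around the row to be removed. -/
lemma torV_succ_le_flatW {m n N : ℕ} [NeZero m] [NeZero n] (s₁ s₂ : ℝ) (hm : m ≤ N) :
    torV m (n + 1) s₁ s₂ ≤ (8 * N ^ 2 + 1) ^ (2 * m) *
      volume {x | x ∈ flatW m n s₁ s₂ (1 / N) ∧ x (0, 0) ∈ Set.Icc (0 : ℝ) 1} := by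
  have hN : 1 ≤ N := (Nat.one_le_iff_ne_zero.2 (NeZero.ne m)).trans hm
  have hn : 1 ≤ n := Nat.one_le_iff_ne_zero.2 (NeZero.ne n)
  have hN0 : (0 : ℝ) < N := by exact_mod_cast hN
  set p : Fin 2 → ZMod (n + 1) := ![((n - 1 : ℕ) : ZMod (n + 1)), (n : ZMod (n + 1))] with hp
  have hp0 : p 0 + 1 = (n : ZMod (n + 1)) := by
    simp only [hp, Matrix.cons_val_zero]
    rw [← Nat.cast_add_one, Nat.sub_add_cancel hn]
  have hp1 : p 1 + 1 = 0 := by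
    have : p 1 = (n : ZMod (n + 1)) := rfl
    rw [this]
    exact_mod_cast ZMod.natCast_self (n + 1)
  -- `D a k` is the vertical increment at column `k` above row `p a`
  set D : Fin 2 → ZMod m → (ZMod m × ZMod (n + 1) → ℝ) →ₗ[ℝ] ℝ := fun a k =>
    (LinearMap.proj (k, p a + 1) : (ZMod m × ZMod (n + 1) → ℝ) →ₗ[ℝ] ℝ) -
      (LinearMap.proj (k, p a) : (ZMod m × ZMod (n + 1) → ℝ) →ₗ[ℝ] ℝ) with hD
  have hDx : ∀ a k x, D a k x = x (k, p a + 1) - x (k, p a) := fun a k x => rfl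
  set ℓ : Fin 2 → ZMod m → (ZMod m × ZMod (n + 1) → ℝ) →ₗ[ℝ] ℝ := fun a k =>
    D a k - (meanL (ZMod m)).comp (LinearMap.pi (D a)) with hℓ
  have hℓx : ∀ a k x, ℓ a k x = D a k x - meanL (ZMod m) (fun k => D a k x) := fun a k x => rfl
  set σ : ZMod m → Equiv.Perm (ZMod m × ZMod (n + 1)) := fun j =>
    (Equiv.addRight j).prodCongr (Equiv.refl _) with hσ
  have hσx : ∀ j k l, σ j (k, l) = (k + j, l) := fun j k l => rfl
  rw [torV_eq_mean]
  have hQm : MeasurableSet {x | x ∈ torW m (n + 1) s₁ s₂ ∧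
      meanL (ZMod m × ZMod (n + 1)) x ∈ Set.Icc (0 : ℝ) 1} :=
    (isClosed_torW _ _ _ _).measurableSet.inter (measurableSet_Icc.preimage
      (LinearMap.continuous_of_finiteDimensional _).measurable)
  have hQc : Convex ℝ {x | x ∈ torW m (n + 1) s₁ s₂ ∧
      meanL (ZMod m × ZMod (n + 1)) x ∈ Set.Icc (0 : ℝ) 1} :=
    (convex_torW _ _ _ _).inter ((convex_Icc 0 1).linear_preimage _)
  refine (volume_le_symmetrize hQm hQc ℓ σ ?_ ?_ hN ?_).trans (mul_le_mul_right ?_ _)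
  · rintro j x ⟨hx, hm⟩
    refine ⟨fun k l => ?_, ?_⟩
    · simp only [hσx]
      have := hx (k + j) l
      rw [add_right_comm k j 1, add_right_comm k j 2] at this
      exact this
    · rw [meanL_apply] at hm ⊢
      rwa [Equiv.sum_comp (σ j) x]
  · intro j a k x
    simp only [hℓx, hDx, hσx]
    congr 1
    rw [meanL_apply, meanL_apply]
    congr 1
    exact Equiv.sum_comp (Equiv.addRight j) (fun k => x (k, p a + 1) - x (k, p a))
  · rintro x ⟨hx, -⟩ a k
    rw [hℓx]
    refine (abs_sub_mean_le (f := fun k => D a k x) (fun k k' => torW_diff_sub_le hx (p a) k k')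
      k).trans ?_
    have : (m : ℝ) ≤ N := by exact_mod_cast hm
    linarith
  · have hmean : meanL (ZMod m × ZMod (n + 1)) (fun _ => 1) = 1 := by
      rw [meanL_apply, Finset.sum_const, Finset.card_univ, nsmul_eq_mul, mul_one]
      exact div_self (by exact_mod_cast Fintype.card_ne_zero)
    refine le_of_le_of_eq (measure_mono ?_) (volume_slab_eq flatW_add_const (meanL _)
      (LinearMap.proj (0, 0)) hmean (by simp))
    rintro x ⟨⟨hx, hxm⟩, hf⟩
    refine ⟨⟨hx, fun k k' => ?_, fun k k' => ?_⟩, hxm⟩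
    · have := hf 0 k k'
      rw [hℓx, hℓx, sub_sub_sub_cancel_right, hDx, hDx, hp0] at this
      exact this
    · have := hf 1 k k'
      rw [hℓx, hℓx, sub_sub_sub_cancel_right, hDx, hDx, hp1] at this
      exact this

/-- Fubini over the last row: its fibres are thin tubes, and the remaining rows are mapped by
`seamMap` into the polytope of the smaller torus. -/
lemma volume_flatW_le {m n N : ℕ} [NeZero m] [NeZero n] (hn : 12 ≤ n) {s₁ s₂ : ℝ}
    (hs₁ : 2 ≤ s₁) (hs₂ : 2 ≤ s₂) (hN : n + 1 ≤ N) :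
    volume {x | x ∈ flatW m n s₁ s₂ (1 / N) ∧ x (0, 0) ∈ Set.Icc (0 : ℝ) 1} ≤
      ENNReal.ofReal (2 * ((2 + s₂) * N)) *
        (ENNReal.ofReal (2 * 3 ^ (6 * m)) * torV m n s₁ s₂) := by
  have hnR : (12 : ℝ) ≤ n := by exact_mod_cast hn
  have hn0 : (0 : ℝ) < n := by linarith
  have hNR : (n : ℝ) + 1 ≤ N := by exact_mod_cast hN
  set A := {x | x ∈ flatW m n s₁ s₂ (1 / N) ∧ x (0, 0) ∈ Set.Icc (0 : ℝ) 1} with hA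
  have hAm : MeasurableSet A := (isClosed_flatW _ _ _ _ _).measurableSet.inter
    (measurableSet_Icc.preimage (by fun_prop))
  have hpres := measurePreserving_rowEquiv m n
  rw [← hpres.measure_preimage hAm.nullMeasurableSet]
  set G := fun (p : (ZMod m → ℝ) × (ZMod m × ZMod n → ℝ)) (q : ZMod m × ZMod (n + 1)) =>
    Sum.elim p.1 p.2 ((rowEquiv m n).symm q) with hG
  have hGr : ∀ r y k, G (r, y) (k, (n : ZMod (n + 1))) = r k := by
    intro r y k
    have : (k, (n : ZMod (n + 1))) = rowEquiv m n (Sum.inl k) := rfl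
    simp only [hG]
    rw [this, Equiv.symm_apply_apply, Sum.elim_inl]
  have hGy : ∀ r y q, G (r, y) (q.1, (q.2.val : ZMod (n + 1))) = y q := by
    intro r y q
    have : (q.1, (q.2.val : ZMod (n + 1))) = rowEquiv m n (Sum.inr q) := rfl
    simp only [hG]
    rw [this, Equiv.symm_apply_apply, Sum.elim_inr]
  have hval : ((n - 1 : ℕ) : ZMod n).val = n - 1 := by
    rw [ZMod.val_natCast, Nat.mod_eq_of_lt (by omega)]
  have hGl : ∀ r y k, G (r, y) (k, ((n - 1 : ℕ) : ZMod (n + 1))) = y (k, ((n - 1 : ℕ) : ZMod n)) := by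
    intro r y k
    have := hGy r y (k, ((n - 1 : ℕ) : ZMod n))
    rwa [hval] at this
  have hG0 : ∀ r y, G (r, y) (0, 0) = y (0, 0) := by
    intro r y
    have := hGy r y (0, 0)
    simpa using this
  set B := {x | x ∈ torW m n s₁ s₂ ∧ x (0, 0) ∈ Set.Icc (0 : ℝ) 1} with hB
  have hBm : MeasurableSet B := (isClosed_torW _ _ _ _).measurableSet.inter
    (measurableSet_Icc.preimage (by fun_prop))
  have hseamc : Continuous (seamMap m n s₂) := by
    unfold seamMap
    fun_prop
  refine (volume_prod_le (B := seamMap m n s₂ ⁻¹' B) (c := ENNReal.ofReal (2 * ((2 + s₂) * N)))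
    (hAm.preimage hpres.measurable) (hBm.preimage hseamc.measurable) ?_ ?_).trans
    (mul_le_mul_right (volume_preimage_seamMap_le hn s₂ B) _)
  · rintro r y ⟨⟨hx, h1, h2⟩, hx0⟩
    have hmem := seamMap_mem hn hs₁ hs₂ (η := 1 / N) (by positivity)
      (one_div_le_one_div_of_le hn0 (by linarith)) hx
      (fun k k' => (le_abs_self _).trans (h1 k k')) (fun k k' => (le_abs_self _).trans (h2 k k'))
    have hy : (fun p : ZMod m × ZMod n => G (r, y) (p.1, (p.2.val : ZMod (n + 1)))) = y :=
      funext fun q => hGy r y q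
    rw [hy] at hmem
    refine ⟨hmem, ?_⟩
    rw [hG0] at hx0
    have hε : 3 / (n : ℝ) ≤ 1 := by rw [div_le_one hn0]; linarith
    have hε0 : 0 ≤ 3 / (n : ℝ) := by positivity
    simp only [seamMap, ZMod.val_zero, Nat.cast_zero, mul_zero, zero_mul, add_zero, zero_div]
    obtain ⟨h0, h1⟩ := hx0
    constructor <;> nlinarith
  · intro y
    refine le_trans (measure_mono ?_) (volume_row_slice_le (η := 1 / N)
      (a := y (0, ((n - 1 : ℕ) : ZMod n))) (L := (2 + s₂) * N) ?_
      (fun k => y (k, ((n - 1 : ℕ) : ZMod n)) - y (0, ((n - 1 : ℕ) : ZMod n))))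
    · rintro r ⟨⟨hx, h1, h2⟩, hx0⟩
      have h3 := torW_diff_abs_le (by linarith) hx ((n - 1 : ℕ) : ZMod (n + 1)) 0
      have e : ((n - 1 : ℕ) : ZMod (n + 1)) + 1 = (n : ZMod (n + 1)) := by
        rw [← Nat.cast_add_one, Nat.sub_add_cancel (by omega)]
      rw [e, hGr, hGl] at h3
      refine ⟨h3.trans ?_, fun k => ?_⟩
      · push_cast
        have : 0 ≤ 2 + s₂ := by linarith
        gcongr
      · have := h1 k 0
        rw [hGr, hGr, hGl, hGl] at this
        convert this using 2
        ring
    · exact one_div_le_one_div_of_le (by norm_num) (by linarith)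

/-- Removing one row of the torus costs at most a factor `s₂ N ^ (10 N)`. -/
lemma torV_succ_le {m n N : ℕ} [NeZero m] [NeZero n] (hn : 12 ≤ n) {s₁ s₂ : ℝ}
    (hs₁ : 2 ≤ s₁) (hs₂ : 2 ≤ s₂) (hm : m ≤ N) (hN : n + 1 ≤ N) :
    torV m (n + 1) s₁ s₂ ≤ ENNReal.ofReal (s₂ * N ^ (10 * N)) * torV m n s₁ s₂ := by
  refine (torV_succ_le_flatW s₁ s₂ hm).trans ?_
  refine (mul_le_mul_right (volume_flatW_le hn hs₁ hs₂ hN) _).trans ?_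
  rw [← mul_assoc, ← mul_assoc]
  refine mul_le_mul_left ?_ _
  have e : ((8 * N ^ 2 + 1) ^ (2 * m) : ℝ≥0∞) = ENNReal.ofReal ((8 * N ^ 2 + 1) ^ (2 * m)) := by
    rw [ENNReal.ofReal_pow (by positivity), ENNReal.ofReal_add (by positivity) (by positivity),
      ENNReal.ofReal_mul (by positivity), ENNReal.ofReal_pow (by positivity)]
    simp
  have hNR : (13 : ℝ) ≤ N := by
    have : 13 ≤ N := by omega
    exact_mod_cast this
  rw [e, ← ENNReal.ofReal_mul (by positivity), ← ENNReal.ofReal_mul (by positivity)]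
  refine ENNReal.ofReal_le_ofReal ?_
  have h1 : (8 * (N : ℝ) ^ 2 + 1) ≤ N ^ 3 := by nlinarith [sq_nonneg (N : ℝ)]
  have h2 : (3 : ℝ) ^ 2 ≤ N := by linarith
  have hN1 : (1 : ℝ) ≤ N := by linarith
  have hmN : 9 * m + 2 ≤ 10 * N := by omega
  have e3 : (3 : ℝ) ^ (6 * m) = (3 ^ 2) ^ (3 * m) := by rw [← pow_mul]; ring_nf
  calc (8 * (N : ℝ) ^ 2 + 1) ^ (2 * m) * (2 * ((2 + s₂) * N)) * (2 * 3 ^ (6 * m))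
      = (8 * (N : ℝ) ^ 2 + 1) ^ (2 * m) * ((3 ^ 2) ^ (3 * m)) * (4 * (2 + s₂) * N) := by
        rw [e3]; ring
    _ ≤ (N ^ 3) ^ (2 * m) * N ^ (3 * m) * (s₂ * N ^ 2) := by
        have : 4 * (2 + s₂) * N ≤ s₂ * N ^ 2 := by
          have : 4 * (2 + s₂) ≤ s₂ * N := by nlinarith
          nlinarith
        have : 0 ≤ 2 + s₂ := by linarith
        gcongr
    _ = s₂ * N ^ (9 * m + 2) := by rw [← pow_mul]; ring
    _ ≤ s₂ * N ^ (10 * N) := by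
        gcongr

lemma torV_add_le {m n N : ℕ} [NeZero m] [NeZero n] (hn : 12 ≤ n) {s₁ s₂ : ℝ}
    (hs₁ : 2 ≤ s₁) (hs₂ : 2 ≤ s₂) (hm : m ≤ N) (j : ℕ) :
    ∀ n' [NeZero n'], n' = n + j → n' ≤ N →
    torV m n' s₁ s₂ ≤ ENNReal.ofReal (s₂ * N ^ (10 * N)) ^ j * torV m n s₁ s₂ := by
  induction j with
  | zero =>
    rintro n' _ rfl -
    simp
  | succ j ih =>
    intro n' _ h hN
    subst h
    have : NeZero (n + j) := ⟨by omega⟩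
    refine (torV_succ_le (n := n + j) (N := N) (by omega) hs₁ hs₂ hm (by omega)).trans ?_
    refine (mul_le_mul_right (ih (n + j) rfl (by omega)) _).trans (le_of_eq ?_)
    rw [pow_succ]
    ring

/-- Passing from the `n₃ × n₃` torus to the `n₂ × n₂` torus row by row and column by column. -/
lemma torV_le_torV {n₂ n₃ : ℕ} [NeZero n₂] [NeZero n₃] (hn : 12 ≤ n₂) (h : n₂ ≤ n₃) {s₁ s₂ : ℝ}
    (hs₁ : 2 ≤ s₁) (hs₂ : 2 ≤ s₂) :
    torV n₃ n₃ s₁ s₂ ≤ ENNReal.ofReal ((s₁ * s₂ * n₃ ^ (20 * n₃)) ^ (n₃ - n₂)) *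
      torV n₂ n₂ s₁ s₂ := by
  have h1 := torV_add_le (m := n₃) (n := n₂) hn hs₁ hs₂ le_rfl (n₃ - n₂) n₃ (by omega) le_rfl
  have h2 := torV_add_le (m := n₂) (n := n₂) hn hs₂ hs₁ h (n₃ - n₂) n₃ (by omega) le_rfl
  rw [torV_swap n₂ n₃, torV_swap n₂ n₂] at h2
  refine (h1.trans (mul_le_mul_right h2 _)).trans (le_of_eq ?_)
  rw [← mul_assoc, ← mul_pow, ← ENNReal.ofReal_mul (by positivity),
    ENNReal.ofReal_pow (by positivity)]
  congr 3
  ring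

/-! ### Two-sided crude bounds for the volume -/

lemma cyclic_abs_sub_le {n : ℕ} [NeZero n] {f : ZMod n → ℝ} {c : ℝ} (hc : 0 ≤ c)
    (hf : ∀ l, |f (l + 1) - f l| ≤ c) (l : ZMod n) : |f l - f 0| ≤ n * c := by
  have key : ∀ j : ℕ, |f (j : ZMod n) - f 0| ≤ j * c := by
    intro j
    induction j with
    | zero => simp
    | succ j ih =>
      have := abs_add_le (f ((j : ZMod n) + 1) - f j) (f (j : ZMod n) - f 0)
      rw [sub_add_sub_cancel] at this
      push_cast
      linarith [hf j]
  have := key l.val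
  rw [ZMod.natCast_zmod_val] at this
  refine this.trans (mul_le_mul_of_nonneg_right ?_ hc)
  exact_mod_cast (ZMod.val_lt l).le

lemma torV_ne_top {m n : ℕ} [NeZero m] [NeZero n] {s₁ s₂ : ℝ} (hs₁ : 0 ≤ s₁) (hs₂ : 0 ≤ s₂) :
    torV m n s₁ s₂ ≠ ∞ := by
  set R : ℝ := 1 + m * ((2 + s₁) * m) + n * ((2 + s₂) * n)
  refine ((measure_mono (t := Set.Icc (fun _ => -R) (fun _ => R)) ?_).trans_lt
    isCompact_Icc.measure_lt_top).ne
  rintro x ⟨hx, h0, h1⟩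
  have key : ∀ p, |x p| ≤ R := by
    rintro ⟨k, l⟩
    have a1 := cyclic_abs_sub_le (f := fun l => x (k, l)) (by positivity)
      (fun l => torW_diff_abs_le hs₂ hx l k) l
    have a2 := cyclic_abs_sub_le (f := fun k => x (k, 0)) (by positivity)
      (fun k => torW_diff_abs_le hs₁ ((torW_swap x).2 hx) k 0) k
    have h3 : |x (0, 0)| ≤ 1 := abs_le.2 ⟨by linarith, h1⟩
    have e : x (k, l) = (x (k, l) - x (k, 0)) + (x (k, 0) - x (0, 0)) + x (0, 0) := by ring
    rw [e]
    refine (abs_add_three _ _ _).trans ?_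
    simp only [R]
    linarith
  exact ⟨fun p => (abs_le.1 (key p)).1, fun p => (abs_le.1 (key p)).2⟩

/-- In the coordinates `x (0, 0)`, `x (k, 0) - x (0, 0)`, `x (0, l) - x (0, 0)` and
`x (k, l) - x (k, 0) - x (0, l) + x (0, 0)`, which are unimodular because they differ from the
standard ones by a nilpotent map, the slab contains a box. -/
lemma le_torV {n : ℕ} [NeZero n] {s₁ s₂ : ℝ} (hs₁ : 2 ≤ s₁) (hs₂ : 2 ≤ s₂) :
    ENNReal.ofReal ((s₁ * s₂) ^ (n - 1) * (1 / 4) ^ (n ^ 2)) ≤ torV n n s₁ s₂ := by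
  classical
  set f : (ZMod n × ZMod n → ℝ) →ₗ[ℝ] (ZMod n × ZMod n → ℝ) := LinearMap.pi fun p =>
    if p = (0, 0) then 0 else if p.1 = 0 ∨ p.2 = 0 then LinearMap.proj (0, 0) else
      (LinearMap.proj (p.1, 0) : (ZMod n × ZMod n → ℝ) →ₗ[ℝ] ℝ) +
        (LinearMap.proj (0, p.2) : (ZMod n × ZMod n → ℝ) →ₗ[ℝ] ℝ) -
        (LinearMap.proj (0, 0) : (ZMod n × ZMod n → ℝ) →ₗ[ℝ] ℝ) with hf
  have f00 : ∀ x, f x (0, 0) = 0 := fun x => by simp [hf]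
  have fk0 : ∀ x k, k ≠ 0 → f x (k, 0) = x (0, 0) := fun x k hk => by simp [hf, hk]
  have f0l : ∀ x l, l ≠ 0 → f x (0, l) = x (0, 0) := fun x k hk => by simp [hf, hk]
  have fkl : ∀ x k l, k ≠ 0 → l ≠ 0 → f x (k, l) = x (k, 0) + x (0, l) - x (0, 0) :=
    fun x k l hk hl => by simp [hf, hk, hl]
  have hnil : IsNilpotent f := by
    refine ⟨3, LinearMap.ext fun x => funext fun ⟨k, l⟩ => ?_⟩
    rw [pow_succ, pow_two]
    simp only [Module.End.mul_apply, LinearMap.zero_apply, Pi.zero_apply]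
    by_cases hk : k = 0 <;> by_cases hl : l = 0
    · subst hk hl; rw [f00]
    · subst hk; rw [f0l _ _ hl, f00]
    · subst hl; rw [fk0 _ _ hk, f00]
    · rw [fkl _ _ _ hk hl, fk0 _ _ hk, f0l _ _ hl, f00, f00]; ring
  have hdet : LinearMap.det (1 - f) = 1 := by
    have h1 := LinearMap.eval_charpoly f 1
    rw [hnil.charpoly_eq_X_pow_finrank] at h1
    simpa using h1.symm
  set w : ZMod n × ZMod n → ℝ := fun p =>
    (if p.2 = 0 then (if p.1 = 0 then 1 else s₁) else 1) *
      (if p.1 = 0 then (if p.2 = 0 then 1 else s₂) else 1) with hw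
  set lo : ZMod n × ZMod n → ℝ := fun p => if p = (0, 0) then 0 else - (w p / 8) with hlo
  set hi : ZMod n × ZMod n → ℝ := fun p => lo p + w p * (1 / 4) with hhi
  have hprod : ∏ p, w p = (s₁ * s₂) ^ (n - 1) := by
    have hc : ∀ c : ℝ, ∏ k : ZMod n, (if k = 0 then 1 else c) = c ^ (n - 1) := by
      intro c
      rw [← Finset.mul_prod_erase _ _ (Finset.mem_univ (0 : ZMod n)), if_pos rfl, one_mul,
        Finset.prod_congr rfl (fun k hk => if_neg (Finset.ne_of_mem_erase hk)),
        Finset.prod_const, Finset.card_erase_of_mem (Finset.mem_univ _), Finset.card_univ,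
        ZMod.card]
    rw [hw, Finset.prod_mul_distrib, Fintype.prod_prod_type, Fintype.prod_prod_type_right, mul_pow]
    congr 1
    · rw [← hc s₁]
      refine Finset.prod_congr rfl fun k _ => ?_
      simp only
      rw [Finset.prod_ite_eq' Finset.univ (0 : ZMod n)]
      simp
    · rw [← hc s₂]
      refine Finset.prod_congr rfl fun k _ => ?_
      simp only
      rw [Finset.prod_ite_eq' Finset.univ (0 : ZMod n)]
      simp
  have hw0 : ∀ p, 0 ≤ w p := by
    intro p
    simp only [hw]
    split_ifs <;> simp <;> linarith
  have hvol := Measure.addHaar_preimage_linearMap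
    (volume : Measure (ZMod n × ZMod n → ℝ)) (f := (1 - f))
    (by rw [hdet]; exact one_ne_zero) (Set.Icc lo hi)
  rw [hdet, Real.volume_Icc_pi] at hvol
  simp only [inv_one, abs_one, ENNReal.ofReal_one, one_mul, hhi, add_sub_cancel_left] at hvol
  rw [← ENNReal.ofReal_prod_of_nonneg (fun p _ => by have := hw0 p; positivity)] at hvol
  rw [Finset.prod_mul_distrib, hprod, Finset.prod_const, Finset.card_univ, Fintype.card_prod,
    ZMod.card, ← pow_two] at hvol
  rw [← hvol]
  refine measure_mono ?_
  intro x hx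
  have hx' : ∀ p, lo p ≤ x p - f x p ∧ x p - f x p ≤ lo p + w p * (1 / 4) :=
    fun p => ⟨hx.1 p, hx.2 p⟩
  have hF : ∀ k, |x (k, 0) - x (0, 0)| ≤ s₁ / 8 := by
    intro k
    by_cases hk : k = 0
    · subst hk; simp; linarith
    · have := hx' (k, 0)
      rw [fk0 x k hk] at this
      simp only [hlo, hw, Prod.mk.injEq, hk, false_and, if_false, if_true, mul_one] at this
      rw [abs_le]
      constructor <;> linarith
  have hG : ∀ l, |x (0, l) - x (0, 0)| ≤ s₂ / 8 := by
    intro k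
    by_cases hk : k = 0
    · subst hk; simp; linarith
    · have := hx' (0, k)
      rw [f0l x k hk] at this
      simp only [hlo, hw, Prod.mk.injEq, hk, and_false, if_false, if_true, one_mul] at this
      rw [abs_le]
      constructor <;> linarith
  have hZ : ∀ k l, |x (k, l) - x (k, 0) - x (0, l) + x (0, 0)| ≤ 1 / 4 := by
    intro k l
    by_cases hk : k = 0
    · subst hk; simp
    by_cases hl : l = 0
    · subst hl; simp
    have := hx' (k, l)
    rw [fkl x k l hk hl] at this
    simp only [hlo, hw, Prod.mk.injEq, hk, hl, and_false, if_false, one_mul] at this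
    rw [abs_le]
    constructor <;> linarith
  refine ⟨fun k l => ?_, ?_⟩
  · have z1 := abs_le.1 (hZ k l)
    have z2 := abs_le.1 (hZ (k + 1) l)
    have z3 := abs_le.1 (hZ k (l + 1))
    have z4 := abs_le.1 (hZ (k + 1) (l + 1))
    have z5 := abs_le.1 (hZ (k + 2) l)
    have z6 := abs_le.1 (hZ k (l + 2))
    have f1 := abs_le.1 (hF k)
    have f2 := abs_le.1 (hF (k + 1))
    have f3 := abs_le.1 (hF (k + 2))
    have g1 := abs_le.1 (hG l)
    have g2 := abs_le.1 (hG (l + 1))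
    have g3 := abs_le.1 (hG (l + 2))
    refine ⟨?_, ?_, ?_⟩ <;> linarith
  · have := hx' (0, 0)
    rw [f00] at this
    simp only [hlo, hw, if_true] at this
    constructor <;> linarith

/-! ### Conclusion -/

/-- The bookkeeping of exponents: `p`, `q` are the logarithms of the two volumes, `S` that of
`s₁ s₂` and `L` that of `N`. -/
lemma exponent_bookkeeping {N n p q S L : ℝ} (hN : 3 ≤ N) (hn : 0 < n) (hnN : n < N) (hS : 0 ≤ S)
    (hL : 1 ≤ L) (hy : 120 * (N - n) * L / N < 1)
    (hpq : p ≤ q + (N - n) * (S + 26 * (N * L)))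
    (hp : (N - 1) * S - N ^ 2 * L - L ≤ p) :
    p / N ^ 2 - 120 * (N - n) * L / N ≤ q / n ^ 2 := by
  have hN0 : 0 < N := by linarith
  have hL0 : 0 < L := by linarith
  have hn2 : N / 2 ≤ n := by
    rw [div_lt_one hN0] at hy
    nlinarith
  set a := (n + N) / N ^ 2 with ha
  have ha1 : 3 / (2 * N) ≤ a := by
    rw [ha, div_le_div_iff₀ (by positivity) (by positivity)]
    nlinarith
  have ha2 : a ≤ 2 / N := by
    rw [ha, div_le_div_iff₀ (by positivity) (by positivity)]
    nlinarith
  have ha0 : 0 < a := by positivity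
  have h1 : S ≤ a * ((N - 1) * S) := by
    have h2 : 1 ≤ 3 / (2 * N) * (N - 1) := by
      rw [div_mul_eq_mul_div, le_div_iff₀ (by positivity)]
      linarith
    have h3 : 1 ≤ a * (N - 1) :=
      h2.trans (mul_le_mul_of_nonneg_right ha1 (by linarith))
    nlinarith [mul_le_mul_of_nonneg_right h3 hS]
  have h4 : a * (N ^ 2 * L + L) ≤ 4 * (N * L) := by
    have h5 : N ^ 2 * L + L ≤ 2 * N ^ 2 * L := by
      nlinarith [mul_le_mul_of_nonneg_right (by nlinarith : (1 : ℝ) ≤ N ^ 2) hL0.le]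
    calc a * (N ^ 2 * L + L) ≤ 2 / N * (2 * N ^ 2 * L) := by gcongr
      _ = 4 * (N * L) := by field_simp; ring
  have h6 : 30 * (N * L) ≤ 120 * L * n ^ 2 / N := by
    rw [le_div_iff₀ hN0]
    have : N * N ≤ 4 * n ^ 2 := by nlinarith
    nlinarith [mul_le_mul_of_nonneg_left this hL0.le]
  have h7 : S + 26 * (N * L) ≤ a * p + 120 * L * n ^ 2 / N := by
    have := mul_le_mul_of_nonneg_left hp ha0.le
    linarith
  have h8 := mul_le_mul_of_nonneg_left h7 (by linarith : 0 ≤ N - n)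
  rw [le_div_iff₀ (by positivity)]
  have e : (p / N ^ 2 - 120 * (N - n) * L / N) * n ^ 2 =
      p - (N - n) * (a * p + 120 * L * n ^ 2 / N) := by
    rw [ha]
    field_simp
    ring
  rw [e]
  linarith

lemma one_le_sq_sub_one {n : ℕ} (hn : 2 ≤ n) : 1 ≤ n ^ 2 - 1 := by
  have : 2 ^ 2 ≤ n ^ 2 := Nat.pow_le_pow_left hn 2
  omega

lemma evol_polyP_eq (n : ℕ) [NeZero n] {s : Fin 3 → ℝ} (hs : s 0 = 2) :
    n * evol n ((n : ℝ) ^ 2 - 1) (polyP n s) =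
      (cubeConst (n ^ 2 - 1)).toReal * (torV n n (s 1) (s 2)).toReal := by
  have := congrArg ENNReal.toReal (hausdorffMeasure_polyP n hs)
  rw [ENNReal.toReal_mul, ENNReal.toReal_mul, ENNReal.toReal_natCast] at this
  exact this

lemma one_le_cubeConst_toReal (d : ℕ) : 1 ≤ (cubeConst d).toReal := by
  have := ENNReal.toReal_mono (cubeConst_ne_top d) (one_le_cubeConst d)
  simpa using this

lemma le_torV_toReal (n : ℕ) [NeZero n] {s₁ s₂ : ℝ} (hs₁ : 2 ≤ s₁) (hs₂ : 2 ≤ s₂) :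
    (s₁ * s₂) ^ (n - 1) * (1 / 4) ^ (n ^ 2) ≤ (torV n n s₁ s₂).toReal :=
  (ENNReal.ofReal_le_iff_le_toReal (torV_ne_top (by linarith) (by linarith))).1
    (le_torV hs₁ hs₂)

lemma torV_toReal_pos (n : ℕ) [NeZero n] {s₁ s₂ : ℝ} (hs₁ : 2 ≤ s₁) (hs₂ : 2 ≤ s₂) :
    0 < (torV n n s₁ s₂).toReal :=
  lt_of_lt_of_le (by positivity) (le_torV_toReal n hs₁ hs₂)

lemma evol_polyP_pos (n : ℕ) [NeZero n] {s : Fin 3 → ℝ} (hs : s 0 = 2) (hs1 : 2 ≤ s 1)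
    (hs2 : 2 ≤ s 2) : 0 < evol n ((n : ℝ) ^ 2 - 1) (polyP n s) := by
  have : 0 < n * evol n ((n : ℝ) ^ 2 - 1) (polyP n s) := by
    rw [evol_polyP_eq n hs]
    exact mul_pos (one_pos.trans_le (one_le_cubeConst_toReal _)) (torV_toReal_pos n hs1 hs2)
  exact pos_of_mul_pos_right this (Nat.cast_nonneg _)

lemma log_evol_polyP (n : ℕ) [NeZero n] {s : Fin 3 → ℝ} (hs : s 0 = 2) (hs1 : 2 ≤ s 1)
    (hs2 : 2 ≤ s 2) : Real.log n + Real.log (evol n ((n : ℝ) ^ 2 - 1) (polyP n s)) =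
      Real.log (cubeConst (n ^ 2 - 1)).toReal + Real.log (torV n n (s 1) (s 2)).toReal := by
  rw [← Real.log_mul (Nat.cast_ne_zero.2 (NeZero.ne n)) (evol_polyP_pos n hs hs1 hs2).ne',
    evol_polyP_eq n hs, Real.log_mul (one_pos.trans_le (one_le_cubeConst_toReal _)).ne'
      (torV_toReal_pos n hs1 hs2).ne']

lemma le_log_evol_polyP {n : ℕ} [NeZero n] (hn : 4 ≤ n) {s : Fin 3 → ℝ} (hs : s 0 = 2)
    (hs1 : 2 ≤ s 1) (hs2 : 2 ≤ s 2) :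
    ((n : ℝ) - 1) * Real.log (s 1 * s 2) - (n : ℝ) ^ 2 * Real.log n - Real.log n ≤
      Real.log (evol n ((n : ℝ) ^ 2 - 1) (polyP n s)) := by
  have hlog4 : Real.log 4 ≤ Real.log n :=
    Real.log_le_log (by norm_num) (by exact_mod_cast hn)
  have h1 := Real.log_le_log (by positivity) (le_torV_toReal n hs1 hs2)
  rw [Real.log_mul (by positivity) (by positivity), Real.log_pow, Real.log_pow, one_div,
    Real.log_inv, Nat.cast_sub (by omega)] at h1
  push_cast at h1
  have h2 := Real.log_nonneg (one_le_cubeConst_toReal (n ^ 2 - 1))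
  have h3 := mul_le_mul_of_nonneg_left hlog4 (by positivity : (0 : ℝ) ≤ (n : ℝ) ^ 2)
  linarith [log_evol_polyP n hs hs1 hs2]

lemma log_torV_le {n₂ n₃ : ℕ} [NeZero n₂] [NeZero n₃] (hn : 12 ≤ n₂) (hlt : n₂ ≤ n₃)
    {s₁ s₂ : ℝ} (hs₁ : 2 ≤ s₁) (hs₂ : 2 ≤ s₂) :
    Real.log (torV n₃ n₃ s₁ s₂).toReal ≤ ((n₃ : ℝ) - n₂) *
      (Real.log (s₁ * s₂) + 20 * n₃ * Real.log n₃) + Real.log (torV n₂ n₂ s₁ s₂).toReal := by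
  have hN0 : (0 : ℝ) < n₃ := by exact_mod_cast (by omega : 0 < n₃)
  have h := ENNReal.toReal_mono (ENNReal.mul_ne_top ENNReal.ofReal_ne_top
    (torV_ne_top (by linarith) (by linarith))) (torV_le_torV hn hlt hs₁ hs₂)
  rw [ENNReal.toReal_mul, ENNReal.toReal_ofReal (by positivity)] at h
  have := Real.log_le_log (torV_toReal_pos n₃ hs₁ hs₂) h
  rw [Real.log_mul (by positivity) (torV_toReal_pos n₂ hs₁ hs₂).ne', Real.log_pow,
    Real.log_mul (by positivity) (by positivity), Real.log_pow, Nat.cast_sub hlt] at this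
  push_cast at this
  exact this

lemma log_cubeConst_le {n₂ n₃ : ℕ} (hn : 12 ≤ n₂) (hlt : n₂ ≤ n₃) :
    Real.log (cubeConst (n₃ ^ 2 - 1)).toReal ≤ 2 * n₃ * ((n₃ : ℝ) - n₂) * (3 * Real.log n₃) +
      Real.log (cubeConst (n₂ ^ 2 - 1)).toReal := by
  have hltR : (n₂ : ℝ) ≤ n₃ := by exact_mod_cast hlt
  have hN : (12 : ℝ) ≤ n₃ := by exact_mod_cast hn.trans hlt
  have hN0 : (0 : ℝ) < n₃ := by linarith
  set K := n₃ ^ 2 - n₂ ^ 2 with hK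
  have hsq : n₂ ^ 2 ≤ n₃ ^ 2 := Nat.pow_le_pow_left hlt 2
  have h1 := one_le_sq_sub_one (n := n₂) (by omega)
  have h := cubeConst_add_le (d := n₂ ^ 2 - 1) (N := n₃ ^ 2) h1 K (by omega)
  have e : n₂ ^ 2 - 1 + K = n₃ ^ 2 - 1 := by omega
  rw [e] at h
  have h2 := ENNReal.toReal_mono (ENNReal.mul_ne_top (by finiteness) (cubeConst_ne_top _)) h
  have h3 : (cubeConst (n₃ ^ 2 - 1)).toReal ≤
      (6 * (n₃ : ℝ) ^ 2) ^ K * (cubeConst (n₂ ^ 2 - 1)).toReal := by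
    simpa using h2
  have lcc := Real.log_le_log (one_pos.trans_le (one_le_cubeConst_toReal _)) h3
  rw [Real.log_mul (by positivity) (one_pos.trans_le (one_le_cubeConst_toReal _)).ne',
    Real.log_pow] at lcc
  have l6 : Real.log (6 * (n₃ : ℝ) ^ 2) ≤ 3 * Real.log n₃ := by
    have h : (6 * (n₃ : ℝ) ^ 2) ≤ n₃ ^ 3 := by nlinarith [mul_pos hN0 hN0]
    have := Real.log_le_log (by positivity) h
    rwa [Real.log_pow] at this
  have hKR : (K : ℝ) ≤ 2 * n₃ * (n₃ - n₂) := by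
    rw [hK, Nat.cast_sub hsq]
    push_cast
    have := mul_nonneg (sub_nonneg.2 hltR) (sub_nonneg.2 hltR)
    linarith
  have lK : (K : ℝ) * Real.log (6 * (n₃ : ℝ) ^ 2) ≤ 2 * n₃ * (n₃ - n₂) * (3 * Real.log n₃) :=
    mul_le_mul hKR l6 (Real.log_nonneg (by nlinarith))
      (mul_nonneg (by positivity) (sub_nonneg.2 hltR))
  linarith

/-- Lemma 4.  There is a universal constant `C ≥ 1` such that for all
integers `C < n₂ < n₃` and all `s` with `2 = s₀ ≤ s₁ ≤ s₂`,
`|P_{n₂}(s)|^{1/n₂²} ≥ |P_{n₃}(s)|^{1/n₃²} (1 - C (n₃ - n₂) ln n₃ / n₃)`. -/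
theorem stmt5 :
    ∃ C : ℝ, 1 ≤ C ∧
      ∀ (n₂ n₃ : ℕ) [NeZero n₂] [NeZero n₃], C < (n₂ : ℝ) → n₂ < n₃ →
        ∀ (s : Fin 3 → ℝ), s 0 = 2 → s 0 ≤ s 1 → s 1 ≤ s 2 →
          evol n₃ ((n₃ : ℝ) ^ 2 - 1) (polyP n₃ s) ^ (1 / (n₃ : ℝ) ^ 2)
              * (1 - C * ((n₃ : ℝ) - (n₂ : ℝ)) * Real.log n₃ / n₃)
            ≤ evol n₂ ((n₂ : ℝ) ^ 2 - 1) (polyP n₂ s) ^ (1 / (n₂ : ℝ) ^ 2) := by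
  refine ⟨120, by norm_num, ?_⟩
  intro n₂ n₃ _ _ hC hlt s hs0 hs01 hs12
  have hs1 : 2 ≤ s 1 := by linarith
  have hs2 : 2 ≤ s 2 := by linarith
  have hn2 : 120 < n₂ := by exact_mod_cast hC
  have hltR : (n₂ : ℝ) < n₃ := by exact_mod_cast hlt
  have hN0 : (0 : ℝ) < n₃ := by linarith
  have hn20 : (0 : ℝ) < n₂ := by linarith
  have hE3 := evol_polyP_pos n₃ hs0 hs1 hs2
  have hE2 := evol_polyP_pos n₂ hs0 hs1 hs2
  have hpq : Real.log (evol n₃ ((n₃ : ℝ) ^ 2 - 1) (polyP n₃ s)) ≤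
      Real.log (evol n₂ ((n₂ : ℝ) ^ 2 - 1) (polyP n₂ s)) +
        (n₃ - n₂) * (Real.log (s 1 * s 2) + 26 * (n₃ * Real.log n₃)) := by
    have l23 : Real.log n₂ ≤ Real.log n₃ := Real.log_le_log hn20 hltR.le
    linarith [log_evol_polyP n₃ hs0 hs1 hs2, log_evol_polyP n₂ hs0 hs1 hs2,
      log_torV_le (by omega) hlt.le hs1 hs2,
      log_cubeConst_le (n₂ := n₂) (n₃ := n₃) (by omega) hlt.le]
  have hp := le_log_evol_polyP (n := n₃) (by omega) hs0 hs1 hs2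
  generalize evol n₃ ((n₃ : ℝ) ^ 2 - 1) (polyP n₃ s) = E₃ at *
  generalize evol n₂ ((n₂ : ℝ) ^ 2 - 1) (polyP n₂ s) = E₂ at *
  rcases le_or_gt 1 (120 * ((n₃ : ℝ) - (n₂ : ℝ)) * Real.log n₃ / n₃) with hy | hy
  · exact (mul_nonpos_of_nonneg_of_nonpos (Real.rpow_nonneg hE3.le _) (by linarith)).trans
      (Real.rpow_nonneg hE2.le _)
  have hL : 1 ≤ Real.log n₃ := by
    rw [Real.le_log_iff_exp_le hN0]
    linarith [Real.exp_one_lt_d9]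
  have key := exponent_bookkeeping (by linarith) hn20 hltR (Real.log_nonneg (by nlinarith)) hL hy
    hpq hp
  rw [Real.rpow_def_of_pos hE3, Real.rpow_def_of_pos hE2, mul_one_div, mul_one_div]
  refine (mul_le_mul_of_nonneg_left (Real.one_sub_le_exp_neg _) (Real.exp_pos _).le).trans ?_
  rw [← Real.exp_add, ← sub_eq_add_neg]
  exact Real.exp_le_exp.2 key
end
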